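/- arXiv:1611.04344 — 2 statements merged into one kernel-verified Lean document; each statement's English description precedes it below -/
import Mathlib

section
/- For every natural number m ≥ 1 there exists a C^∞ map f from the m-fold product S⁴ × S⁴ × ⋯ × S⁴ of 4-spheres to the 3-sphere S³ whose set of critical points is finite and has cardinality at most 2^m. (This is the upper bound φ(S⁴ × ⋯ × S⁴, S³) ≤ 2^m.) -/
open Function Manifold Metric Module Set

instance : Fact (finrank ℝ (EuclideanSpace ℝ (Fin 5)) = 4 + 1) :=
  ⟨finrank_euclideanSpace_fin⟩

instance : Fact (finrank ℝ (EuclideanSpace ℝ (Fin 4)) = 3 + 1) :=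
  ⟨finrank_euclideanSpace_fin⟩

/-!
Identify `S³` with the group of unit quaternions. A slice of the product map
`(x₁, …, x_m) ↦ f x₁ * ⋯ * f x_m` in the `i`-th variable is `f` followed by a left and a right
translation, so at a critical point of the product every `xᵢ` is critical for `f`. It therefore
suffices to find a map `f : S⁴ → S³` with at most two critical points, and the suspension of the
Hopf fibration `S³ → S²`, suitably smoothed at the poles, is one.
-/

open scoped ContDiff InnerProductSpace Quaternion

section CriticalSet

variable {𝕜 : Type*} [NontriviallyNormedField 𝕜]
  {E : Type*} [NormedAddCommGroup E] [NormedSpace 𝕜 E] {H : Type*} [TopologicalSpace H]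
  {I : ModelWithCorners 𝕜 E H} {M : Type*} [TopologicalSpace M] [ChartedSpace H M]
  {E' : Type*} [NormedAddCommGroup E'] [NormedSpace 𝕜 E'] {H' : Type*} [TopologicalSpace H']
  {J : ModelWithCorners 𝕜 E' H'} {N : Type*} [TopologicalSpace N] [ChartedSpace H' N]
  {E'' : Type*} [NormedAddCommGroup E''] [NormedSpace 𝕜 E''] {H'' : Type*} [TopologicalSpace H'']
  {K : ModelWithCorners 𝕜 E'' H''} {P : Type*} [TopologicalSpace P] [ChartedSpace H'' P]

variable (I J) in
/-- The critical points of `f : M → N`: those at which the differential is not surjective. -/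
def criticalSet (f : M → N) : Set M :=
  {x | ¬ Surjective (mfderiv I J f x)}

theorem mem_criticalSet_comp {g : N → P} {f : M → N} {x : M} (hg : MDifferentiableAt J K g (f x))
    (hf : MDifferentiableAt I J f x) (hx : f x ∈ criticalSet J K g) :
    x ∈ criticalSet I K (g ∘ f) := by
  intro hgf
  rw [mfderiv_comp x hg hf] at hgf
  exact hx (Surjective.of_comp hgf)

theorem criticalSet_diffeomorph_comp {n : ℕ∞ω} (hn : n ≠ 0) (Φ : N ≃ₘ^n⟮J, K⟯ P) {f : M → N}
    (hf : MDifferentiable I J f) : criticalSet I K (Φ ∘ f) = criticalSet I J f := by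
  ext x
  have hΦ : Bijective (mfderiv J K Φ (f x)) :=
    (Φ.mfderivToContinuousLinearEquiv hn (f x)).bijective
  simp only [criticalSet, mem_ofPred_eq]
  rw [mfderiv_comp x (Φ.mdifferentiable hn _) (hf x)]
  exact not_congr (Surjective.of_comp_iff' hΦ _)

theorem criticalSet_comp_diffeomorph {n : ℕ∞ω} (hn : n ≠ 0) (Φ : M ≃ₘ^n⟮I, J⟯ N) {g : N → P}
    (hg : MDifferentiable J K g) : criticalSet I K (g ∘ Φ) = Φ ⁻¹' criticalSet J K g := by
  ext x
  have hΦ : Surjective (mfderiv I J Φ x) := (Φ.mfderivToContinuousLinearEquiv hn x).surjective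
  simp only [criticalSet, mem_ofPred_eq, mem_preimage]
  rw [mfderiv_comp x (hg _) (Φ.mdifferentiable hn x)]
  exact not_congr (hΦ.of_comp_iff _)

end CriticalSet

section ProductManifold

variable {𝕜 : Type*} [NontriviallyNormedField 𝕜] {ι : Type*} [Fintype ι]
  {E : ι → Type*} [∀ i, NormedAddCommGroup (E i)] [∀ i, NormedSpace 𝕜 (E i)]
  {H : ι → Type*} [∀ i, TopologicalSpace (H i)] {I : ∀ i, ModelWithCorners 𝕜 (E i) (H i)}
  {M : ι → Type*} [∀ i, TopologicalSpace (M i)] [∀ i, ChartedSpace (H i) (M i)]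
  {E' : Type*} [NormedAddCommGroup E'] [NormedSpace 𝕜 E'] {H' : Type*} [TopologicalSpace H']
  {J : ModelWithCorners 𝕜 E' H'} {N : Type*} [TopologicalSpace N] [ChartedSpace H' N]
  {n : ℕ∞ω}

theorem contMDiff_eval (i : ι) :
    ContMDiff (ModelWithCorners.pi I) (I i) n fun x : ∀ i, M i ↦ x i := by
  intro x
  rw [ContMDiffAt, contMDiffWithinAt_iff']
  refine ⟨(continuous_apply i).continuousWithinAt,
    (ContinuousLinearMap.proj (R := 𝕜) (φ := E) i).contDiff.contDiffWithinAt.congr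
      (fun y hy ↦ ?_) ?_⟩
  · exact (extChartAt (I i) (x i)).right_inv ⟨hy.1.1 i (mem_univ i), hy.1.2 i (mem_univ i)⟩
  · exact (extChartAt (I i) (x i)).right_inv
      ((extChartAt (I i) (x i)).map_source (mem_extChartAt_source _))

theorem contMDiff_pi_iff {f : N → ∀ i, M i} :
    ContMDiff J (ModelWithCorners.pi I) n f ↔ ∀ i, ContMDiff J (I i) n fun y ↦ f y i := by
  refine ⟨fun hf i ↦ (contMDiff_eval i).comp hf, fun hf x ↦ contMDiffAt_iff.2
    ⟨(continuous_pi fun i ↦ (hf i).continuous).continuousAt, contDiffWithinAt_pi.2 fun i ↦ ?_⟩⟩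
  exact (contMDiffAt_iff.1 (hf i x)).2

theorem contMDiff_update [DecidableEq ι] (x : ∀ i, M i) (i : ι) :
    ContMDiff (I i) (ModelWithCorners.pi I) n (update x i) := by
  refine contMDiff_pi_iff.2 fun j ↦ ?_
  obtain rfl | hj := eq_or_ne j i
  · simp only [update_self]
    exact contMDiff_id
  · simpa only [update_of_ne hj] using contMDiff_const

end ProductManifold

theorem prod_ofFn_update {G : Type*} [Monoid G] {m : ℕ} (g : Fin m → G) (i : Fin m) (a : G) :
    (List.ofFn (update g i a)).prod =
      ((List.ofFn g).take i).prod * a * ((List.ofFn g).drop (i + 1)).prod := by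
  have : List.ofFn (update g i a) = (List.ofFn g).set i a := by
    apply List.ext_getElem
    · simp
    · intro j hj hj'
      simp [List.getElem_set, update_apply, Fin.ext_iff, eq_comm]
  simp [this, List.prod_set]

section ContMDiffMul

variable {𝕜 : Type*} [NontriviallyNormedField 𝕜]
  {E : Type*} [NormedAddCommGroup E] [NormedSpace 𝕜 E] {H : Type*} [TopologicalSpace H]
  {I : ModelWithCorners 𝕜 E H} {n : ℕ∞ω} {G : Type*} [TopologicalSpace G] [ChartedSpace H G]

theorem contMDiff_prod_ofFn [Monoid G] [ContMDiffMul I n G] {E' : Type*} [NormedAddCommGroup E']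
    [NormedSpace 𝕜 E'] {H' : Type*} [TopologicalSpace H'] {J : ModelWithCorners 𝕜 E' H'}
    {N : Type*} [TopologicalSpace N] [ChartedSpace H' N] {m : ℕ} {f : Fin m → N → G}
    (hf : ∀ i, ContMDiff J I n (f i)) :
    ContMDiff J I n fun x ↦ (List.ofFn fun i ↦ f i x).prod := by
  induction m with
  | zero => simpa using contMDiff_const
  | succ m ih =>
    simp only [List.ofFn_succ, List.prod_cons]
    exact (hf 0).mul (ih fun i ↦ hf i.succ)

variable [Group G] [ContMDiffMul I n G]

variable (I n) in
/-- The two-sided translation `g ↦ a * g * b` of a Lie group, as a diffeomorphism. -/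
def mulLeftRightDiffeomorph (a b : G) : G ≃ₘ^n⟮I, I⟯ G where
  toEquiv := (Equiv.mulLeft a).trans (Equiv.mulRight b)
  contMDiff_toFun := contMDiff_mul_right.comp contMDiff_mul_left
  contMDiff_invFun := contMDiff_mul_left.comp contMDiff_mul_right

variable {m : ℕ} {E' : Fin m → Type*} [∀ i, NormedAddCommGroup (E' i)]
  [∀ i, NormedSpace 𝕜 (E' i)] {H' : Fin m → Type*} [∀ i, TopologicalSpace (H' i)]
  {J : ∀ i, ModelWithCorners 𝕜 (E' i) (H' i)} {M : Fin m → Type*} [∀ i, TopologicalSpace (M i)]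
  [∀ i, ChartedSpace (H' i) (M i)]

theorem contMDiff_prod_ofFn_apply {f : ∀ i, M i → G} (hf : ∀ i, ContMDiff (J i) I n (f i)) :
    ContMDiff (ModelWithCorners.pi J) I n
      fun x : ∀ i, M i ↦ (List.ofFn fun i ↦ f i (x i)).prod :=
  contMDiff_prod_ofFn fun i ↦ (hf i).comp (contMDiff_eval i)

theorem criticalSet_prod_ofFn_subset (hn : n ≠ 0) {f : ∀ i, M i → G}
    (hf : ∀ i, ContMDiff (J i) I n (f i)) :
    criticalSet (ModelWithCorners.pi J) I (fun x : ∀ i, M i ↦ (List.ofFn fun i ↦ f i (x i)).prod) ⊆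
      univ.pi fun i ↦ criticalSet (J i) I (f i) := by
  intro x hx i _
  set F := fun x : ∀ i, M i ↦ (List.ofFn fun i ↦ f i (x i)).prod with hF
  have hFs : ContMDiff (ModelWithCorners.pi J) I n F := contMDiff_prod_ofFn_apply hf
  let Φ := mulLeftRightDiffeomorph I n ((List.ofFn fun i ↦ f i (x i)).take i).prod
    ((List.ofFn fun i ↦ f i (x i)).drop (i + 1)).prod
  have hslice : F ∘ update x i = Φ ∘ f i := by
    funext s
    have h : (fun j ↦ f j (update x i s j)) = update (fun j ↦ f j (x j)) i (f i s) :=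
      funext (apply_update f x i s)
    simp only [hF, comp_apply, h, prod_ofFn_update]
    rfl
  rw [← update_eq_self i x] at hx
  have hcrit := mem_criticalSet_comp (hFs.mdifferentiable hn _)
    ((contMDiff_update x i).mdifferentiable hn _) hx
  rwa [hslice, criticalSet_diffeomorph_comp hn Φ ((hf i).mdifferentiable hn)] at hcrit

theorem encard_criticalSet_prod_ofFn_le (hn : n ≠ 0) {f : ∀ i, M i → G}
    (hf : ∀ i, ContMDiff (J i) I n (f i)) :
    (criticalSet (ModelWithCorners.pi J) I
      fun x : ∀ i, M i ↦ (List.ofFn fun i ↦ f i (x i)).prod).encard ≤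
      ∏ i, (criticalSet (J i) I (f i)).encard := by
  rw [← encard_pi_eq_prod_encard]
  exact encard_le_encard (criticalSet_prod_ofFn_subset hn hf)

end ContMDiffMul

section Sphere

variable {E : Type*} [NormedAddCommGroup E] [InnerProductSpace ℝ E] {n : ℕ}
  [Fact (finrank ℝ E = n + 1)]
  {F : Type*} [NormedAddCommGroup F] [InnerProductSpace ℝ F]

/-- The diffeomorphism of unit spheres induced by a linear isometry. -/
def sphereDiffeomorph [Fact (finrank ℝ F = n + 1)] (e : E ≃ₗᵢ[ℝ] F) :
    sphere (0 : E) 1 ≃ₘ^ω⟮𝓡 n, 𝓡 n⟯ sphere (0 : F) 1 where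
  toEquiv := e.toEquiv.subtypeEquiv fun x ↦ by simp
  contMDiff_toFun :=
    (e.contDiff.contMDiff.comp contMDiff_coe_sphere).codRestrict_sphere fun x ↦ by simp
  contMDiff_invFun :=
    (e.symm.contDiff.contMDiff.comp contMDiff_coe_sphere).codRestrict_sphere fun x ↦ by simp

instance {A : Type*} [NormedRing A] [NormMulClass A] [NormOneClass A] [InnerProductSpace ℝ A]
    [IsScalarTower ℝ A A] [SMulCommClass ℝ A A] [Fact (finrank ℝ A = n + 1)] :
    ContMDiffMul (𝓡 n) ω (sphere (0 : A) 1) where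
  contMDiff_mul := by
    have hmul : ContDiff ℝ ω fun p : A × A ↦ p.1 * p.2 :=
      (ContinuousLinearMap.mul ℝ A).isBoundedBilinearMap.contDiff
    exact (hmul.contMDiff.comp ((contMDiff_coe_sphere.comp contMDiff_fst).prodMk_space
      (contMDiff_coe_sphere.comp contMDiff_snd))).codRestrict_sphere fun p ↦ (p.1 * p.2).2

theorem surjective_mfderiv_codRestrict_sphere {m : ℕ} [Fact (finrank ℝ F = m + 1)] {f : E → F}
    (hf : ContDiff ℝ 1 f) (hf' : ∀ x : sphere (0 : E) 1, f x ∈ sphere (0 : F) 1)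
    {p : sphere (0 : E) 1}
    (hp : ∀ y, ⟪f p, y⟫_ℝ = 0 → ∃ v, ⟪(p : E), v⟫_ℝ = 0 ∧ fderiv ℝ f p v = y) :
    Surjective (mfderiv (𝓡 n) (𝓡 m) (codRestrict (fun x : sphere (0 : E) 1 ↦ f x) _ hf') p) := by
  set g := codRestrict (fun x : sphere (0 : E) 1 ↦ f x) _ hf'
  intro w
  have hg : ContMDiff (𝓡 n) (𝓡 m) 1 g :=
    (hf.contMDiff.comp contMDiff_coe_sphere).codRestrict_sphere hf'
  have hy : mvfderiv (𝓡 m) ((↑) : sphere (0 : F) 1 → F) (g p) w ∈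
      (mvfderiv (𝓡 m) ((↑) : sphere (0 : F) 1 → F) (g p)).range := ⟨w, rfl⟩
  rw [range_mvfderiv_subtypeVal, Submodule.mem_orthogonal_singleton_iff_inner_right] at hy
  obtain ⟨v, hpv, hfv⟩ := hp _ hy
  obtain ⟨u, rfl⟩ : v ∈ (mvfderiv (𝓡 n) ((↑) : sphere (0 : E) 1 → E) p).range := by
    rwa [range_mvfderiv_subtypeVal, Submodule.mem_orthogonal_singleton_iff_inner_right]
  refine ⟨u, injective_mvfderiv_subtypeVal_sphere (g p) ?_⟩
  have hcoe_g : HasMFDerivAt (𝓡 n) 𝓘(ℝ, F) (fun x ↦ (g x : F)) p _ :=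
    ((contMDiff_coe_sphere (m := 1) (g p)).mdifferentiableAt one_ne_zero).hasMFDerivAt.comp p
      ((hg p).mdifferentiableAt one_ne_zero).hasMFDerivAt
  have hf_coe : HasMFDerivAt (𝓡 n) 𝓘(ℝ, F) (fun x : sphere (0 : E) 1 ↦ f x) p _ :=
    (hf.differentiable one_ne_zero p).hasFDerivAt.hasMFDerivAt.comp p
      ((contMDiff_coe_sphere (m := 1) p).mdifferentiableAt one_ne_zero).hasMFDerivAt
  exact (DFunLike.congr_fun (hasMFDerivAt_unique hcoe_g hf_coe) u).trans hfv

end Sphere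

instance : Fact (finrank ℝ ℍ = 3 + 1) := ⟨Quaternion.finrank_eq_four⟩

instance : Fact (finrank ℝ (WithLp 2 (ℍ × ℝ)) = 4 + 1) :=
  ⟨by rw [(WithLp.linearEquiv 2 ℝ (ℍ × ℝ)).finrank_eq, finrank_prod, Quaternion.finrank_eq_four,
    finrank_self]⟩

section Poles

variable {E : Type*} [NormedAddCommGroup E]

theorem norm_fst_sq_add_snd_sq (p : sphere (0 : WithLp 2 (E × ℝ)) 1) :
    ‖p.1.fst‖ ^ 2 + p.1.snd ^ 2 = 1 := by
  rw [← sq_abs p.1.snd, ← Real.norm_eq_abs, ← WithLp.prod_norm_sq_eq_of_L2, norm_eq_of_mem_sphere,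
    one_pow]

theorem encard_sphere_fst_eq_zero_le_two :
    {p : sphere (0 : WithLp 2 (E × ℝ)) 1 | p.1.fst = 0}.encard ≤ 2 := by
  set S := {p : sphere (0 : WithLp 2 (E × ℝ)) 1 | p.1.fst = 0}
  let height (p : sphere (0 : WithLp 2 (E × ℝ)) 1) : ℝ := p.1.snd
  have hinj : InjOn height S := fun p hp q hq h ↦
    Subtype.ext (WithLp.ofLp_injective 2 (Prod.ext (hp.trans hq.symm) h))
  have himage : height '' S ⊆ {1, -1} := by
    rintro _ ⟨p, hp : p.1.fst = 0, rfl⟩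
    have hheight := norm_fst_sq_add_snd_sq p
    rw [hp, norm_zero, zero_pow two_ne_zero, zero_add] at hheight
    exact sq_eq_one_iff.1 hheight
  calc
    S.encard = (height '' S).encard := hinj.encard_image.symm
    _ ≤ ({1, -1} : Set ℝ).encard := encard_le_encard himage
    _ ≤ 2 := (encard_insert_le _ _).trans (by rw [encard_singleton, one_add_one_eq_two])

end Poles

section Hopf

/-- The Hopf map `q ↦ q * i * q̄`, from the quaternions to the imaginary quaternions `ℝ³`; it
restricts to the Hopf fibration `S³ → S²`. -/
noncomputable def hopfMap (q : ℍ) : ℍ :=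
  q * Complex.I * star q

theorem star_coe_complexI : star (Complex.I : ℍ) = -Complex.I := by
  ext <;> simp

theorem star_hopfMap (q : ℍ) : star (hopfMap q) = -hopfMap q := by
  simp [hopfMap, mul_assoc, star_coe_complexI]

theorem norm_hopfMap (q : ℍ) : ‖hopfMap q‖ = ‖q‖ ^ 2 := by
  have hI : ‖(Complex.I : ℍ)‖ = 1 := by
    have : ‖(Complex.I : ℍ)‖ * ‖(Complex.I : ℍ)‖ = 1 := by
      rw [← Quaternion.normSq_eq_norm_mul_self, Quaternion.normSq_def']
      simp
    nlinarith [norm_nonneg (Complex.I : ℍ)]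
  simp [hopfMap, hI, sq]

theorem inner_one_eq_zero_of_star_eq_neg {z : ℍ} (hz : star z = -z) : ⟪z, 1⟫_ℝ = 0 := by
  rw [Quaternion.inner_def, star_one, mul_one]
  exact Quaternion.star_eq_neg.1 hz

instance {R : Type*} [CommRing R] [Star R] [TrivialStar R] : StarModule R ℍ[R] :=
  ⟨fun r q ↦ by rw [Quaternion.star_smul, star_trivial r]⟩

@[fun_prop]
theorem contDiff_hopfMap {n : ℕ∞ω} : ContDiff ℝ n hopfMap :=
  (contDiff_id.mul contDiff_const).mul (starL' ℝ : ℍ ≃L[ℝ] ℍ).contDiff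

theorem hasLineDerivAt_hopfMap (q v : ℍ) :
    HasLineDerivAt ℝ hopfMap (v * Complex.I * star q + q * Complex.I * star v) q v := by
  have h : HasDerivAt (fun s : ℝ ↦ q + s • v) v 0 := by
    simpa using ((hasDerivAt_id (0 : ℝ)).smul_const v).const_add q
  exact ((h.mul_const (Complex.I : ℍ)).mul h.star).congr_deriv (by simp)

theorem exists_deriv_hopfMap_eq {q w : ℍ} (hq : q ≠ 0) (hw : star w = -w) :
    ∃ v, HasLineDerivAt ℝ hopfMap ((2 : ℝ) • w) q v ∧ ‖q‖ ^ 2 * ⟪q, v⟫_ℝ = ⟪hopfMap q, w⟫_ℝ := by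
  have hq' : ‖q‖ ^ 2 ≠ 0 := by positivity
  set v := -(‖q‖ ^ 2)⁻¹ • (w * q * Complex.I) with hv
  have hvI : v * Complex.I * star q = w := by
    have hII : (Complex.I : ℍ) * Complex.I = -1 := by ext <;> simp
    have hqq : q * star q = ((‖q‖ ^ 2 : ℝ) : ℍ) := by
      rw [Quaternion.self_mul_star, Quaternion.normSq_eq_norm_mul_self, sq]
    calc
      v * Complex.I * star q =
          -(‖q‖ ^ 2)⁻¹ • (w * q * ((Complex.I : ℍ) * Complex.I) * star q) := by
        simp only [hv, smul_mul_assoc, mul_assoc]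
      _ = (‖q‖ ^ 2)⁻¹ • (w * (q * star q)) := by simp [hII, mul_assoc]
      _ = w := by rw [hqq, Quaternion.mul_coe_eq_smul, inv_smul_smul₀ hq']
  have hIv : q * Complex.I * star v = w := by
    calc
      q * Complex.I * star v = -star (v * Complex.I * star q) := by
        simp [star_coe_complexI, mul_assoc]
      _ = w := by rw [hvI, hw, neg_neg]
  refine ⟨v, ?_, ?_⟩
  · have := hasLineDerivAt_hopfMap q v
    rwa [hvI, hIv, ← two_smul ℝ] at this
  · calc
      ‖q‖ ^ 2 * ⟪q, v⟫_ℝ = -(q * star (w * q * Complex.I)).re := by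
        rw [inner_smul_right, Quaternion.inner_def]
        field_simp
      _ = ⟪hopfMap q, w⟫_ℝ := by
        rw [Quaternion.inner_def, ← Quaternion.re_neg]
        simp only [hopfMap, star_mul, star_coe_complexI, mul_assoc, neg_mul, mul_neg, neg_neg]

/-- The formula for the suspended Hopf map `suspHopf`, on all of `ℍ × ℝ`. On the unit sphere
`‖hopfMap q‖ = ‖q‖ ^ 2 = 1 - t ^ 2`, and `(1 - t ^ 2) ^ 2 + (2 * t) ^ 2 = (1 + t ^ 2) ^ 2`. -/
noncomputable def suspHopfExt (x : WithLp 2 (ℍ × ℝ)) : ℍ :=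
  (1 + x.snd ^ 2)⁻¹ • (hopfMap x.fst + (2 * x.snd) • 1)

@[fun_prop]
theorem contDiff_suspHopfExt {n : ℕ∞ω} : ContDiff ℝ n suspHopfExt := by
  have hfst : ContDiff ℝ n fun x : WithLp 2 (ℍ × ℝ) ↦ x.fst := (WithLp.fstL 2 ℝ ℍ ℝ).contDiff
  have hsnd : ContDiff ℝ n fun x : WithLp 2 (ℍ × ℝ) ↦ x.snd := (WithLp.sndL 2 ℝ ℍ ℝ).contDiff
  have hden : ∀ x : WithLp 2 (ℍ × ℝ), 1 + x.snd ^ 2 ≠ 0 := fun x ↦ by positivity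
  unfold suspHopfExt
  fun_prop (disch := assumption)

theorem suspHopfExt_mem_sphere (p : sphere (0 : WithLp 2 (ℍ × ℝ)) 1) :
    suspHopfExt p ∈ sphere (0 : ℍ) 1 := by
  have hp := norm_fst_sq_add_snd_sq p
  have hnum : ‖hopfMap p.1.fst + (2 * p.1.snd) • 1‖ = 1 + p.1.snd ^ 2 := by
    rw [← sq_eq_sq₀ (norm_nonneg _) (by positivity), norm_add_sq_real, inner_smul_right,
      inner_one_eq_zero_of_star_eq_neg (star_hopfMap _), norm_hopfMap, norm_smul, norm_one,
      Real.norm_eq_abs, mul_one, sq_abs, eq_sub_of_add_eq hp]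
    ring
  rw [mem_sphere_zero_iff_norm, suspHopfExt, norm_smul, hnum, Real.norm_of_nonneg (by positivity),
    inv_mul_cancel₀ (by positivity)]

theorem hasLineDerivAt_suspHopfExt {x v : WithLp 2 (ℍ × ℝ)} {w : ℍ}
    (hw : HasLineDerivAt ℝ hopfMap w x.fst v.fst) :
    HasLineDerivAt ℝ suspHopfExt
      ((1 + x.snd ^ 2)⁻¹ • (w + (2 * v.snd) • 1) -
        (2 * x.snd * v.snd / (1 + x.snd ^ 2)) • suspHopfExt x) x v := by
  have hsnd : HasDerivAt (fun s : ℝ ↦ x.snd + s • v.snd) v.snd 0 := by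
    simpa using ((hasDerivAt_id (0 : ℝ)).smul_const v.snd).const_add x.snd
  have hnum : HasDerivAt (fun s : ℝ ↦ hopfMap (x.fst + s • v.fst) + (2 * (x.snd + s • v.snd)) • 1)
      (w + (2 * v.snd) • 1) 0 :=
    HasDerivAt.add hw ((hsnd.const_mul 2).smul_const (1 : ℍ))
  have hinv := ((hsnd.pow 2).const_add 1).inv (by simp only [Pi.pow_apply]; positivity)
  refine (hinv.smul hnum).congr_deriv ?_
  simp only [suspHopfExt, Pi.inv_apply, Pi.pow_apply, zero_smul, add_zero, Nat.cast_ofNat,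
    Nat.add_one_sub_one, pow_one]
  match_scalars
  all_goals
    field_simp
    try ring

theorem inner_hopfMap_im_eq_of_inner_suspHopfExt_eq_zero {x : WithLp 2 (ℍ × ℝ)} {y : ℍ}
    (hy : ⟪suspHopfExt x, y⟫_ℝ = 0) : ⟪hopfMap x.fst, y.im⟫_ℝ = -(2 * x.snd * y.re) := by
  rw [suspHopfExt, real_inner_smul_left] at hy
  have hnum := (mul_eq_zero.1 hy).resolve_left (by positivity)
  have hre : ⟪hopfMap x.fst, (y.re : ℍ)⟫_ℝ = 0 := by
    rw [← mul_one (y.re : ℍ), Quaternion.coe_mul_eq_smul, inner_smul_right,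
      inner_one_eq_zero_of_star_eq_neg (star_hopfMap _), mul_zero]
  rw [← Quaternion.re_add_im y, inner_add_left, inner_add_right, hre, zero_add,
    Quaternion.re_add_im, real_inner_smul_left, Quaternion.inner_def 1, one_mul,
    Quaternion.re_star] at hnum
  linarith

theorem exists_fderiv_suspHopfExt_eq {p : sphere (0 : WithLp 2 (ℍ × ℝ)) 1} (hp : p.1.fst ≠ 0)
    {y : ℍ} (hy : ⟪suspHopfExt p, y⟫_ℝ = 0) :
    ∃ v, ⟪(p : WithLp 2 (ℍ × ℝ)), v⟫_ℝ = 0 ∧ fderiv ℝ suspHopfExt p v = y := by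
  have hinner := inner_hopfMap_im_eq_of_inner_suspHopfExt_eq_zero hy
  have hline {u : ℍ} {s : ℝ} {w : ℍ} (hw : HasLineDerivAt ℝ hopfMap w p.1.fst u) :=
    hasLineDerivAt_suspHopfExt (v := WithLp.toLp 2 (u, s)) hw
  set q := p.1.fst
  set t := p.1.snd
  have hq : ‖q‖ ^ 2 ≠ 0 := by positivity
  have hqt : ‖q‖ ^ 2 = 1 - t ^ 2 := eq_sub_of_add_eq (norm_fst_sq_add_snd_sq p)
  -- The real part of `fderiv ℝ suspHopfExt p (u, s) = y` determines `s`, the imaginary part `w`.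
  set w := ((1 + t ^ 2) / 2) • y.im + (t * (1 + t ^ 2) * y.re / (2 * ‖q‖ ^ 2)) • hopfMap q
    with hw
  set s := (1 + t ^ 2) ^ 2 * y.re / (2 * ‖q‖ ^ 2) with hs
  have hw_star : star w = -w := by
    simp only [hw, star_add, star_smul, star_trivial, Quaternion.star_im, star_hopfMap]
    module
  obtain ⟨u, hu, hqu⟩ := exists_deriv_hopfMap_eq hp hw_star
  have htangent : ‖q‖ ^ 2 * (⟪q, u⟫_ℝ + t * s) = 0 := by
    rw [mul_add, hqu, hw, hs, inner_add_right, inner_smul_right, inner_smul_right, hinner,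
      real_inner_self_eq_norm_sq, norm_hopfMap]
    field_simp
    rw [hqt]
    ring
  have hderiv : (1 + t ^ 2)⁻¹ • ((2 : ℝ) • w + (2 * s) • 1) -
      (2 * t * s / (1 + t ^ 2)) • (1 + t ^ 2)⁻¹ • (hopfMap q + (2 * t) • 1) = y := by
    have hy : y = y.re • 1 + y.im := by ext <;> simp
    conv_rhs => rw [hy]
    rw [hw, hs]
    match_scalars <;> field_simp
    · ring
    · rw [hqt]
      ring
  refine ⟨WithLp.toLp 2 (u, s), ?_, ?_⟩
  · rw [WithLp.prod_inner_apply, Real.inner_apply]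
    exact (mul_eq_zero.1 htangent).resolve_left hq
  · rw [← (contDiff_suspHopfExt.differentiable one_ne_zero _).lineDeriv_eq_fderiv]
    exact (hline hu).lineDeriv.trans hderiv

/-- The suspension of the Hopf fibration, from the unit sphere `S⁴` of `ℍ × ℝ` to the unit
quaternions `S³`; it maps the poles `(0, ±1)` to `±1`. -/
noncomputable def suspHopf : sphere (0 : WithLp 2 (ℍ × ℝ)) 1 → sphere (0 : ℍ) 1 :=
  codRestrict (fun p : sphere (0 : WithLp 2 (ℍ × ℝ)) 1 ↦ suspHopfExt p) _ suspHopfExt_mem_sphere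

theorem contMDiff_suspHopf : ContMDiff (𝓡 4) (𝓡 3) ω suspHopf :=
  (contDiff_suspHopfExt.contMDiff.comp contMDiff_coe_sphere).codRestrict_sphere
    suspHopfExt_mem_sphere

theorem criticalSet_suspHopf_subset : criticalSet (𝓡 4) (𝓡 3) suspHopf ⊆ {p | p.1.fst = 0} :=
  fun _ hp ↦ by_contra fun hfst ↦ hp <|
    surjective_mfderiv_codRestrict_sphere contDiff_suspHopfExt suspHopfExt_mem_sphere
      fun _ ↦ exists_fderiv_suspHopfExt_eq hfst

theorem encard_criticalSet_suspHopf_le_two : (criticalSet (𝓡 4) (𝓡 3) suspHopf).encard ≤ 2 :=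
  (encard_le_encard criticalSet_suspHopf_subset).trans encard_sphere_fst_eq_zero_le_two

end Hopf

/-- **Upper bound `φ(S⁴ × ⋯ × S⁴, S³) ≤ 2^m`.**
For every `m ≥ 1` there is a `C^∞` map from the `m`-fold product of `4`-spheres to the
`3`-sphere whose set of critical points is finite of cardinality at most `2^m`. -/
theorem exists_smooth_map_products_of_spheres_to_sphere_card_critical_le
    (m : ℕ) (hm : 1 ≤ m) :
    ∃ f : (∀ _ : Fin m, sphere (0 : EuclideanSpace ℝ (Fin 5)) 1) →
        sphere (0 : EuclideanSpace ℝ (Fin 4)) 1,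
      ContMDiff (ModelWithCorners.pi fun _ : Fin m => 𝓡 4) (𝓡 3) (⊤ : ℕ∞) f ∧
      {x : ∀ _ : Fin m, sphere (0 : EuclideanSpace ℝ (Fin 5)) 1 |
        ¬ Surjective (mfderiv (ModelWithCorners.pi fun _ : Fin m => 𝓡 4) (𝓡 3) f x)}.Finite ∧
      {x : ∀ _ : Fin m, sphere (0 : EuclideanSpace ℝ (Fin 5)) 1 |
        ¬ Surjective (mfderiv (ModelWithCorners.pi fun _ : Fin m => 𝓡 4) (𝓡 3) f x)}.ncard ≤
        2 ^ m := by
  let Ψ : EuclideanSpace ℝ (Fin 5) ≃ₗᵢ[ℝ] WithLp 2 (ℍ × ℝ) :=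
    ((stdOrthonormalBasis ℝ (WithLp 2 (ℍ × ℝ))).reindex (finCongr Fact.out)).repr.symm
  let Φ : ℍ ≃ₗᵢ[ℝ] EuclideanSpace ℝ (Fin 4) := Quaternion.linearIsometryEquivTuple
  let g : sphere (0 : EuclideanSpace ℝ (Fin 5)) 1 → sphere (0 : ℍ) 1 :=
    suspHopf ∘ sphereDiffeomorph (n := 4) Ψ
  have hg : ContMDiff (𝓡 4) (𝓡 3) ω g := contMDiff_suspHopf.comp (sphereDiffeomorph Ψ).contMDiff
  have hg_critical : (criticalSet (𝓡 4) (𝓡 3) g).encard ≤ 2 := by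
    rw [criticalSet_comp_diffeomorph WithTop.top_ne_zero (sphereDiffeomorph Ψ)
      (contMDiff_suspHopf.mdifferentiable WithTop.top_ne_zero)]
    exact (encard_preimage_of_bijective (sphereDiffeomorph Ψ).bijective _).trans_le
      encard_criticalSet_suspHopf_le_two
  have hprod := contMDiff_prod_ofFn_apply fun _ : Fin m ↦ hg
  refine ⟨sphereDiffeomorph Φ ∘ fun x ↦ (List.ofFn fun i ↦ g (x i)).prod,
    ((sphereDiffeomorph Φ).contMDiff.comp hprod).of_le le_top,
    encard_le_coe_iff_finite_ncard_le.1 ?_⟩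
  change (criticalSet _ _ _).encard ≤ _
  rw [criticalSet_diffeomorph_comp WithTop.top_ne_zero _
    (hprod.mdifferentiable WithTop.top_ne_zero)]
  calc
    _ ≤ ∏ _ : Fin m, (criticalSet (𝓡 4) (𝓡 3) g).encard :=
      encard_criticalSet_prod_ofFn_le WithTop.top_ne_zero fun _ ↦ hg
    _ ≤ 2 ^ m := by simpa using pow_le_pow_left' hg_critical m
end

section
/- For every natural number m ≥ 1, every C^∞ map f from the m-fold product S⁴ × S⁴ × ⋯ × S⁴ of 4-spheres to the 3-sphere S³ has at least one critical point, i.e. there exists a point x at which the differential mfderiv f x : T_x(S⁴ × ⋯ × S⁴) → T_{f(x)} S³ is not surjective. (This is the lower bound 1 ≤ φ(S⁴ × ⋯ × S⁴, S³); in particular S⁴ × ⋯ × S⁴ does not fiber smoothly over S³.) -/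
open Function Manifold Metric Module

/-!
Suppose that `f` had no critical point. An odd-dimensional sphere carries a nowhere vanishing
tangent field `y ↦ J y`, where `J` is an orthogonal complex structure on the ambient space. Extend
`f` to `G` on the product of the punctured ambient spaces `E i ∖ {0}`, homogeneously of degree zero
in each variable. The gradient of `x ↦ ⟪u, G x⟫`, taken with `u = J (G x)` held fixed, is then a
nowhere vanishing field whose component in `E i` is orthogonal to `x i`. This is impossible when
every `E i` has odd dimension, a hairy ball theorem for products in the spirit of Milnor's analytic
proof.

Scale and cut off the field to a compactly supported `Y` such that each point of the product of the
shells `1 ≤ ‖x i‖ ≤ 2` has a component with `‖Y x i‖ > 1`. For a set `S` of factors let `w S` step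
each `x i` radially from the origin to the unit sphere and, for `i ∈ S`, reflect the result in a
line of the plane of `x i` and `Y x i` that has turned from `x i` to `Y x i` once `‖Y x i‖ ≥ 1`.
Off the shells some `‖w S x i‖` is locally constant, so `det D(w S) = 0`. On them, putting a factor
with `‖Y x i‖ > 1` into `S` or removing it negates `w S x i` and hence, the dimension being odd,
`det D(w S)`. So `∑ S, det D(w S) = 0` everywhere. But the determinant is a null Lagrangian:
`∫ det D(w S)` does not change under compactly supported perturbations of `w S`, so it has the same
value for all `S`, which is positive for `S = ∅`.
-/

lemma det_pi_comp_proj {ι R : Type*} [Fintype ι] [CommRing R] {M : ι → Type*}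
    [∀ i, AddCommGroup (M i)] [∀ i, Module R (M i)] [∀ i, Module.Free R (M i)]
    [∀ i, Module.Finite R (M i)] (f : ∀ i, M i →ₗ[R] M i) :
    LinearMap.det (LinearMap.pi fun i => f i ∘ₗ LinearMap.proj i) = ∏ i, LinearMap.det (f i) := by
  classical
  let b i := Module.Free.chooseBasis R (M i)
  let _ : LinearOrder ι := linearOrderOfSTO WellOrderingRel
  set A := LinearMap.toMatrix (Pi.basis b) (Pi.basis b)
    (LinearMap.pi fun i => f i ∘ₗ LinearMap.proj i) with hA
  have entry (i j) : A i j = (b i.1).repr (f i.1 (Pi.single j.1 (b j.1 j.2) i.1)) i.2 := by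
    simp [hA, LinearMap.toMatrix_apply, Pi.basis_repr]
  have triangular : A.BlockTriangular Sigma.fst := fun i j hij => by
    rw [entry, Pi.single_eq_of_ne hij.ne']; simp
  have block (i : ι) : (A.toSquareBlock Sigma.fst i).det = LinearMap.det (f i) := by
    rw [← LinearMap.det_toMatrix (b i),
      ← Matrix.det_submatrix_equiv_self (Equiv.sigmaSubtype i).symm]
    congr 1
    ext j k
    simp [entry, Matrix.toSquareBlock, Matrix.toSquareBlockProp, LinearMap.toMatrix_apply,
      Equiv.sigmaSubtype]
  rw [← LinearMap.det_toMatrix (Pi.basis b), ← hA, triangular.det_fintype]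
  exact Finset.prod_congr rfl fun i _ => block i

section NullLagrangian

open MeasureTheory Polynomial Set
open scoped Pointwise NNReal

lemma integral_eval_eq_eval_of_forall_mem {α : Type*} [MeasurableSpace α] {μ : Measure α}
    {P : α → ℝ[X]} {Q : ℝ[X]} {s : Finset ℝ} (hP : ∀ x, (P x).degree < s.card)
    (hQ : Q.degree < s.card) (hint : ∀ t ∈ s, Integrable (fun x => (P x).eval t) μ)
    (h : ∀ t ∈ s, ∫ x, (P x).eval t ∂μ = Q.eval t) (a : ℝ) :
    ∫ x, (P x).eval a ∂μ = Q.eval a := by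
  have interpolation {p : ℝ[X]} (hp : p.degree < s.card) :
      p.eval a = ∑ t ∈ s, p.eval t * (Lagrange.basis s id t).eval a := by
    conv_lhs => rw [Lagrange.eq_interpolate (injOn_id _) hp]
    simp [Lagrange.interpolate_apply, eval_finsetSum]
  simp_rw [interpolation (hP _), interpolation hQ]
  rw [integral_finsetSum _ fun t ht => (hint t ht).mul_const _]
  exact Finset.sum_congr rfl fun t ht => by rw [integral_mul_const, h t ht]

variable {E : Type*} [NormedAddCommGroup E] [NormedSpace ℝ E]

lemma bijective_smul_add_of_lipschitzWith [CompleteSpace E] {w : E → E} {C : ℝ≥0}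
    (hw : LipschitzWith C w) {l : ℝ} (hl : C < l) : Bijective fun x => l • x + w x := by
  have hl0 : 0 < l := C.2.trans_lt hl
  let L : E ≃L[ℝ] E := ContinuousLinearEquiv.smulLeft (Units.mk0 l hl0.ne')
  have approx : ApproximatesLinearOn (fun x => l • x + w x) (L : E →L[ℝ] E) univ C := by
    refine LipschitzOnWith.approximatesLinearOn ?_
    convert hw.lipschitzOnWith using 1
    ext x
    simp [L, Units.smul_def]
  have hC : Subsingleton E ∨ C < ‖(L.symm : E →L[ℝ] E)‖₊⁻¹ := by
    refine (subsingleton_or_nontrivial E).imp_right fun (_ : Nontrivial E) => ?_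
    have : (L.symm : E →L[ℝ] E) = l⁻¹ • ContinuousLinearMap.id ℝ E := by ext; rfl
    rw [this, ← NNReal.coe_lt_coe]
    simpa [norm_smul, ContinuousLinearMap.norm_id, abs_of_pos hl0] using hl
  exact ⟨injOn_univ.1 (approx.injOn hC), approx.surjective hC⟩

variable [FiniteDimensional ℝ E]

lemma det_smul_id_add_pos {A : E →L[ℝ] E} {l : ℝ} (h : ‖A‖ < l) :
    0 < (l • ContinuousLinearMap.id ℝ E + A).det := by
  have hl : 0 < l := (norm_nonneg A).trans_lt h
  have det_ne_zero {B : E →L[ℝ] E} (hB : ‖B‖ < l) :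
      (l • ContinuousLinearMap.id ℝ E + B).det ≠ 0 := fun h0 => by
    obtain ⟨x, hx, hx0⟩ :=
      Submodule.exists_mem_ne_zero_of_ne_bot (LinearMap.bot_lt_ker_of_det_eq_zero h0).ne'
    have hx : l • x = -B x := eq_neg_of_add_eq_zero_left (by simpa using hx)
    have : l * ‖x‖ ≤ ‖B‖ * ‖x‖ := by
      simpa [norm_smul, abs_of_pos hl, ← norm_neg (B x), ← hx] using B.le_opNorm x
    exact (le_of_mul_le_mul_right this (norm_pos_iff.2 hx0)).not_gt hB
  have hcont : ContinuousOn (fun B : E →L[ℝ] E => (l • ContinuousLinearMap.id ℝ E + B).det)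
      (ball 0 l) := (ContinuousLinearMap.continuous_det.comp (by fun_prop)).continuousOn
  have det_zero : 0 ≤ (l • ContinuousLinearMap.id ℝ E + 0).det := by
    simp [ContinuousLinearMap.det, hl.le]
  by_contra! hneg
  obtain ⟨B, hB, hB0⟩ := (convex_ball 0 l).isPreconnected.intermediate_value
    (mem_ball_zero_iff.2 h) (mem_ball_self hl) hcont ⟨hneg, det_zero⟩
  exact det_ne_zero (mem_ball_zero_iff.1 hB) hB0

lemma eval_charpoly_neg (A : E →L[ℝ] E) (t : ℝ) :
    (-(A : E →ₗ[ℝ] E)).charpoly.eval t = (t • ContinuousLinearMap.id ℝ E + A).det := by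
  rw [LinearMap.eval_charpoly, ContinuousLinearMap.det]
  congr 1
  ext
  simp

variable [MeasurableSpace E] [BorelSpace E] (μ : Measure E) [μ.IsAddHaarMeasure]

lemma setIntegral_det_smul_id_add_fderiv {w : E → E} (hw : Differentiable ℝ w) {C : ℝ≥0}
    (hC : LipschitzWith C w) {K : Set E} (hK : MeasurableSet K) (hwK : support w ⊆ K) {l : ℝ}
    (hl : C < l) :
    ∫ x in K, (l • ContinuousLinearMap.id ℝ E + fderiv ℝ w x).det ∂μ
      = l ^ finrank ℝ E * μ.real K := by
  have hl0 : 0 < l := C.2.trans_lt hl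
  set g : E → E := fun x => l • x + w x with hg
  have hg_bij : Bijective g := bijective_smul_add_of_lipschitzWith hC hl
  have hg' (x) : HasFDerivAt g (l • ContinuousLinearMap.id ℝ E + fderiv ℝ w x) x :=
    ((hasFDerivAt_id x).const_smul l).add (hw x).hasFDerivAt
  have hdet (x) : 0 < (l • ContinuousLinearMap.id ℝ E + fderiv ℝ w x).det :=
    det_smul_id_add_pos ((norm_fderiv_le_of_lipschitz ℝ hC).trans_lt hl)
  have image_eq : g '' K = l • K := by
    have hsmul : Bijective fun x : E => l • x := MulAction.bijective (Units.mk0 l hl0.ne')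
    refine compl_injective ?_
    rw [← image_smul, ← image_compl_eq hg_bij, ← image_compl_eq hsmul]
    exact image_congr fun x hx => by simp [hg, notMem_support.1 fun h => hx (hwK h)]
  calc ∫ x in K, (l • ContinuousLinearMap.id ℝ E + fderiv ℝ w x).det ∂μ
      = ∫ _ in g '' K, (1 : ℝ) ∂μ := by
        rw [integral_image_eq_integral_abs_det_fderiv_smul μ hK
          (fun x _ => (hg' x).hasFDerivWithinAt) hg_bij.injective.injOn]
        simp [abs_of_pos (hdet _)]
    _ = l ^ finrank ℝ E * μ.real K := by
        simp [image_eq, Measure.real, Measure.addHaar_smul, abs_of_pos hl0,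
          ENNReal.toReal_ofReal (pow_nonneg hl0.le _)]

lemma integral_det_fderiv_eq_zero [Nontrivial E] {w : E → E} (hw : ContDiff ℝ 1 w)
    (hc : HasCompactSupport w) : ∫ x, (fderiv ℝ w x).det ∂μ = 0 := by
  obtain ⟨L, hL⟩ := hw.lipschitzWith_of_hasCompactSupport hc one_ne_zero
  set K := tsupport w
  let P (x : E) : ℝ[X] := (-(fderiv ℝ w x : E →ₗ[ℝ] E)).charpoly
  let Q : ℝ[X] := C (μ.real K) * X ^ finrank ℝ E
  obtain ⟨s, hsL, hs⟩ := (Ioi_infinite (L : ℝ)).exists_subset_card_eq (finrank ℝ E + 1)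
  have degree_lt {p : ℝ[X]} (hp : p.natDegree ≤ finrank ℝ E) : p.degree < s.card := by
    rw [hs]
    exact degree_le_natDegree.trans_lt (mod_cast Nat.lt_succ_of_le hp)
  have hint (t : ℝ) : IntegrableOn (fun x => (P x).eval t) K μ := by
    simp_rw [P, eval_charpoly_neg]
    exact (ContinuousLinearMap.continuous_det.comp (continuous_const.add
      (hw.continuous_fderiv one_ne_zero))).continuousOn.integrableOn_compact hc
  have hnode (t : ℝ) (ht : t ∈ s) : ∫ x in K, (P x).eval t ∂μ = Q.eval t := by
    simp_rw [P, eval_charpoly_neg]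
    rw [setIntegral_det_smul_id_add_fderiv μ (hw.differentiable one_ne_zero) hL
      (isClosed_tsupport w).measurableSet subset_closure (hsL ht), mul_comm]
    simp [Q, K]
  have hoff (x : E) (hx : x ∉ K) : (fderiv ℝ w x).det = 0 := by
    simp [fderiv_of_notMem_tsupport ℝ hx, ContinuousLinearMap.det]
  calc ∫ x, (fderiv ℝ w x).det ∂μ
      = ∫ x in K, (P x).eval 0 ∂μ := by
        rw [← setIntegral_eq_integral_of_forall_compl_eq_zero hoff]
        simp [P, eval_charpoly_neg]
    _ = Q.eval 0 := integral_eval_eq_eval_of_forall_mem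
        (fun x => degree_lt (LinearMap.charpoly_natDegree _).le)
        (degree_lt (natDegree_C_mul_X_pow_le _ _)) (fun t _ => hint t) hnode 0
    _ = 0 := by simp [Q, finrank_pos.ne']

lemma integral_det_fderiv_sub_eq_zero [Nontrivial E] {w w' : E → E} (hw : ContDiff ℝ 1 w)
    (hw' : ContDiff ℝ 1 w') (hc : HasCompactSupport (w - w')) :
    ∫ x, ((fderiv ℝ w x).det - (fderiv ℝ w' x).det) ∂μ = 0 := by
  obtain ⟨R, hR0, hR⟩ := hc.isCompact.isBounded.subset_ball_lt 0 0
  let χ : ContDiffBump (0 : E) := ⟨R, R + 1, hR0, lt_add_one R⟩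
  have cutoff {v : E → E} (hv : ContDiff ℝ 1 v) :
      Integrable (fun x => (fderiv ℝ (fun y => χ y • v y) x).det) μ ∧
        ∫ x, (fderiv ℝ (fun y => χ y • v y) x).det ∂μ = 0 := by
    have hχv : ContDiff ℝ 1 fun y => χ y • v y := χ.contDiff.smul hv
    have hχc : HasCompactSupport fun y => χ y • v y := χ.hasCompactSupport.smul_right
    refine ⟨?_, integral_det_fderiv_eq_zero μ hχv hχc⟩
    refine (ContinuousLinearMap.continuous_det.comp
      (hχv.continuous_fderiv one_ne_zero)).integrable_of_hasCompactSupport ?_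
    exact (hχc.fderiv ℝ).comp_left (g := ContinuousLinearMap.det)
      (by simp [ContinuousLinearMap.det])
  have hdet (x : E) : (fderiv ℝ w x).det - (fderiv ℝ w' x).det =
      (fderiv ℝ (fun y => χ y • w y) x).det - (fderiv ℝ (fun y => χ y • w' y) x).det := by
    by_cases hx : x ∈ tsupport (w - w')
    · have hχ : ∀ᶠ y in nhds x, χ y = 1 :=
        Filter.eventually_of_mem (isOpen_ball.mem_nhds (hR hx)) fun y hy =>
          χ.one_of_mem_closedBall (ball_subset_closedBall hy)
      have hχv (v : E → E) : (fun y => χ y • v y) =ᶠ[nhds x] v :=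
        Filter.Eventually.mono hχ fun y hy => by simp [hy]
      rw [(hχv w).fderiv_eq, (hχv w').fderiv_eq]
    · have hww' : w =ᶠ[nhds x] w' :=
        Filter.Eventually.mono (notMem_tsupport_iff_eventuallyEq.1 hx) fun y hy => sub_eq_zero.1 hy
      have hχ : (fun y => χ y • w y) =ᶠ[nhds x] fun y => χ y • w' y :=
        Filter.EventuallyEq.rfl.smul hww'
      rw [hww'.fderiv_eq, hχ.fderiv_eq, sub_self, sub_self]
  simp_rw [hdet]
  rw [integral_sub (cutoff hw).1 (cutoff hw').1, (cutoff hw).2, (cutoff hw').2, sub_zero]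

end NullLagrangian

section RadialStep

lemma det_smul_id_add_smulRight {E : Type*} [NormedAddCommGroup E] [NormedSpace ℝ E]
    [FiniteDimensional ℝ E] [Nontrivial E] (c : ℝ) (φ : E →L[ℝ] ℝ) (x : E) :
    (c • ContinuousLinearMap.id ℝ E + φ.smulRight x).det
      = c ^ (finrank ℝ E - 1) * (c + φ x) := by
  have hcont : Continuous fun c : ℝ => (c • ContinuousLinearMap.id ℝ E + φ.smulRight x).det :=
    ContinuousLinearMap.continuous_det.comp (by fun_prop)
  have hcont' : Continuous fun c : ℝ => c ^ (finrank ℝ E - 1) * (c + φ x) := by fun_prop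
  refine congr_fun (hcont.ext_on (dense_compl_singleton (0 : ℝ)) hcont'
    fun c (hc : c ≠ 0) => ?_) c
  have factor : ((c • ContinuousLinearMap.id ℝ E + φ.smulRight x : E →L[ℝ] E) : E →ₗ[ℝ] E)
      = c • LinearMap.transvection ((c⁻¹ • φ : E →L[ℝ] ℝ) : E →ₗ[ℝ] ℝ) x := by
    ext y
    simp [LinearMap.transvection.apply, smul_smul, hc]
  beta_reduce
  rw [ContinuousLinearMap.det, factor, LinearMap.det_smul, LinearMap.transvection.det,
    ← Nat.sub_add_cancel (finrank_pos (R := ℝ) (M := E)), pow_succ]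
  simp
  field_simp

lemma det_fderiv_norm_smul {E : Type*} [NormedAddCommGroup E] [NormedSpace ℝ E]
    [FiniteDimensional ℝ E] [Nontrivial E] {g : ℝ → ℝ} {g' : ℝ} {x : E}
    (hg : HasDerivAt g g' ‖x‖) (hx : DifferentiableAt ℝ (fun y : E => ‖y‖) x) :
    (fderiv ℝ (fun y => g ‖y‖ • y) x).det
      = g ‖x‖ ^ (finrank ℝ E - 1) * (g ‖x‖ + g' * ‖x‖) := by
  have hderiv : HasFDerivAt (fun y => g ‖y‖ • y) _ x :=
    (hg.comp_hasFDerivAt x hx.hasFDerivAt).smul (hasFDerivAt_id x)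
  rw [hderiv.fderiv, comp_apply, det_smul_id_add_smulRight]
  simp [hx.fderiv_norm_self]

variable {E : Type*} [NormedAddCommGroup E] [InnerProductSpace ℝ E]

/-- A smooth map collapsing the unit ball to the origin and carrying everything outside the ball of
radius `2` to the unit sphere. Its derivative therefore has determinant supported in the spherical
shell between these radii. -/
noncomputable def radialStep (x : E) : E := (Real.smoothTransition (‖x‖ - 1) / ‖x‖) • x

lemma radialStep_of_norm_le {x : E} (hx : ‖x‖ ≤ 1) : radialStep x = 0 := by
  simp [radialStep, Real.smoothTransition.zero_of_nonpos (sub_nonpos.2 hx)]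

lemma norm_radialStep_of_le_norm {x : E} (hx : 2 ≤ ‖x‖) : ‖radialStep x‖ = 1 := by
  have : ‖x‖ ≠ 0 := by positivity
  simp [radialStep, norm_smul, Real.smoothTransition.one_of_one_le (by linarith : 1 ≤ ‖x‖ - 1),
    this]

lemma inner_radialStep_eq_zero {x y : E} (h : inner ℝ x y = 0) : inner ℝ y (radialStep x) = 0 := by
  rw [radialStep, inner_smul_right, real_inner_comm, h, mul_zero]

lemma contDiffAt_radialStep {x : E} (hx : x ≠ 0) : ContDiffAt ℝ 1 radialStep x := by
  have hnorm : ContDiffAt ℝ 1 (fun y : E => ‖y‖) x := contDiffAt_norm ℝ hx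
  have hstep : ContDiffAt ℝ 1 (fun y : E => Real.smoothTransition (‖y‖ - 1)) x :=
    Real.smoothTransition.contDiff.contDiffAt.comp x (hnorm.sub contDiffAt_const)
  exact (hstep.div hnorm (norm_ne_zero_iff.2 hx)).smul contDiffAt_id

variable [FiniteDimensional ℝ E] [Nontrivial E]

lemma det_fderiv_radialStep {x : E} (hx : x ≠ 0) :
    (fderiv ℝ radialStep x).det
      = (Real.smoothTransition (‖x‖ - 1) / ‖x‖) ^ (finrank ℝ E - 1)
        * deriv Real.smoothTransition (‖x‖ - 1) := by
  have hx' : ‖x‖ ≠ 0 := norm_ne_zero_iff.2 hx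
  have hstep : HasDerivAt (fun r => Real.smoothTransition (r - 1))
      (deriv Real.smoothTransition (‖x‖ - 1)) ‖x‖ :=
    ((Real.smoothTransition.contDiff (n := 1)).differentiable
      one_ne_zero _).hasDerivAt.comp_sub_const _ _
  have hnorm : DifferentiableAt ℝ (fun y : E => ‖y‖) x :=
    (contDiffAt_norm ℝ (n := 1) hx).differentiableAt one_ne_zero
  have hdiv : HasDerivAt (fun r => Real.smoothTransition (r - 1) / r) _ ‖x‖ :=
    hstep.div (hasDerivAt_id _) hx'
  unfold radialStep
  rw [det_fderiv_norm_smul hdiv hnorm]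
  congr 1
  field_simp
  ring

lemma det_fderiv_radialStep_nonneg (x : E) : 0 ≤ (fderiv ℝ radialStep x).det := by
  rcases eq_or_ne x 0 with rfl | hx
  · have : radialStep =ᶠ[nhds (0 : E)] fun _ => 0 :=
      Filter.eventually_of_mem (ball_mem_nhds 0 one_pos) fun y hy =>
        radialStep_of_norm_le (mem_ball_zero_iff.1 hy).le
    simp [this.fderiv_eq, ContinuousLinearMap.det]
  · rw [det_fderiv_radialStep hx]
    exact mul_nonneg (pow_nonneg (div_nonneg (Real.smoothTransition.nonneg _) (norm_nonneg x)) _)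
      Real.smoothTransition.monotone.deriv_nonneg

lemma exists_det_fderiv_radialStep_pos : ∃ x : E, 0 < (fderiv ℝ radialStep x).det := by
  obtain ⟨r, hr, hderiv⟩ := exists_deriv_eq_slope Real.smoothTransition zero_lt_one
    Real.smoothTransition.continuous.continuousOn
    ((Real.smoothTransition.contDiff (n := 1)).differentiable one_ne_zero).differentiableOn
  have hr0 : 0 < 1 + r := by linarith [hr.1]
  obtain ⟨x, hx⟩ := exists_norm_eq E hr0.le
  refine ⟨x, ?_⟩
  rw [det_fderiv_radialStep (norm_pos_iff.1 (hx ▸ hr0)), hx, add_sub_cancel_left, hderiv]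
  have hstep := Real.smoothTransition.pos_of_pos hr.1
  rw [Real.smoothTransition.one, Real.smoothTransition.zero, sub_zero, div_self one_ne_zero,
    mul_one]
  positivity

end RadialStep

section RadialReflect

variable {E : Type*} [NormedAddCommGroup E] [InnerProductSpace ℝ E]

/-- For `y` orthogonal to `x`, the reflection of `radialStep x` in a line of the plane spanned by
`x` and `y`. As `‖y‖` grows from `0` to `1` this line turns from that of `x` to that of `y`, so that
`radialStep x` is carried to its opposite without changing its norm. -/
noncomputable def radialReflect (x y : E) : E :=
  Submodule.reflection (ℝ ∙ (Real.smoothTransition (1 - ‖y‖ ^ 2) • x + y)) (radialStep x)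

lemma norm_radialReflect (x y : E) : ‖radialReflect x y‖ = ‖radialStep x‖ :=
  LinearIsometryEquiv.norm_map _ _

lemma radialReflect_zero_right (x : E) : radialReflect x 0 = radialStep x := by
  refine Submodule.reflection_mem_subspace_eq_self (Submodule.smul_mem _ _ ?_)
  simp

lemma radialReflect_of_one_le_norm {x y : E} (h : inner ℝ x y = 0) (hy : 1 ≤ ‖y‖) :
    radialReflect x y = -radialStep x := by
  have hy : 1 - ‖y‖ ^ 2 ≤ 0 := by nlinarith
  refine Submodule.reflection_mem_subspace_orthogonalComplement_eq_neg ?_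
  simpa [Real.smoothTransition.zero_of_nonpos hy,
    Submodule.mem_orthogonal_singleton_iff_inner_right] using inner_radialStep_eq_zero h

lemma radialReflect_axis_ne_zero {x y : E} (hx : x ≠ 0) (h : inner ℝ x y = 0) :
    Real.smoothTransition (1 - ‖y‖ ^ 2) • x + y ≠ 0 := fun h0 => by
  have hcx : Real.smoothTransition (1 - ‖y‖ ^ 2) = 0 := by
    simpa [inner_add_right, inner_smul_right, h, hx] using congr_arg (inner ℝ x) h0
  have hy : y = 0 := by simpa [hcx] using h0
  simp [hy] at hcx

lemma contDiff_radialReflect {V : Type*} [NormedAddCommGroup V] [NormedSpace ℝ V] {u v : V → E}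
    (hu : ContDiff ℝ 1 u) (hv : ContDiff ℝ 1 v) (h : ∀ p, inner ℝ (u p) (v p) = 0) :
    ContDiff ℝ 1 fun p => radialReflect (u p) (v p) := by
  refine contDiff_iff_contDiffAt.2 fun p => ?_
  rcases eq_or_ne (u p) 0 with hp | hp
  · refine (contDiffAt_const (c := 0)).congr_of_eventuallyEq ?_
    filter_upwards [hu.continuous.norm.continuousAt.eventually_lt_const (by simp [hp] : ‖u p‖ < 1)]
      with q hq
    simp [radialReflect, radialStep_of_norm_le hq.le]
  · set a : V → E := fun q => Real.smoothTransition (1 - ‖v q‖ ^ 2) • u q + v q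
    have ha1 : ContDiff ℝ 1 a := ((Real.smoothTransition.contDiff (n := 1)).comp
      (contDiff_const.sub (hv.norm_sq ℝ))).smul hu |>.add hv
    have hrad : ContDiffAt ℝ 1 (fun q => radialStep (u q)) p :=
      (contDiffAt_radialStep hp).comp p hu.contDiffAt
    have hap : a p ≠ 0 := radialReflect_axis_ne_zero hp (h p)
    simp_rw [radialReflect, Submodule.reflection_singleton_apply]
    exact ((((ha1.contDiffAt.inner ℝ hrad).div (ha1.contDiffAt.norm_sq ℝ)
      (pow_ne_zero 2 (norm_ne_zero_iff.2 hap))).smul ha1.contDiffAt).const_smul _).sub hrad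

lemma contDiff_radialStep : ContDiff ℝ 1 (radialStep : E → E) := by
  simpa [radialReflect_zero_right] using
    contDiff_radialReflect (E := E) contDiff_id (contDiff_const (c := 0))
      fun _ => inner_zero_right _

end RadialReflect

section PiRadialReflect

open Filter MeasureTheory Topology

lemma not_surjective_fderiv_of_eventually_norm_eq {V : Type*} [NormedAddCommGroup V]
    [NormedSpace ℝ V] {F : Type*} [NormedAddCommGroup F] [InnerProductSpace ℝ F] [Nontrivial F]
    {w : V → F} {x : V} (hw : DifferentiableAt ℝ w x) {r : ℝ} (h : ∀ᶠ y in 𝓝 x, ‖w y‖ = r) :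
    ¬ Surjective (fderiv ℝ w x) := fun hsurj => by
  rcases eq_or_ne (w x) 0 with hwx | hwx
  · have hconst : w =ᶠ[𝓝 x] fun _ => 0 := h.mono fun y hy => by
      rw [← norm_eq_zero, hy, ← h.self_of_nhds, hwx, norm_zero]
    obtain ⟨a, ha⟩ := exists_ne (0 : F)
    obtain ⟨v, hv⟩ := hsurj a
    exact ha (by simpa [hconst.fderiv_eq] using hv.symm)
  · have hconst : (fun y => ‖w y‖ ^ 2) =ᶠ[𝓝 x] fun _ => r ^ 2 := h.mono fun y hy => by simp [hy]
    have hzero := hconst.fderiv_eq.symm.trans hw.hasFDerivAt.norm_sq.fderiv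
    obtain ⟨v, hv⟩ := hsurj (w x)
    have := DFunLike.congr_fun hzero v
    simp [hv, hwx] at this

variable {ι : Type*} {E : ι → Type*} [∀ i, NormedAddCommGroup (E i)]
  [∀ i, InnerProductSpace ℝ (E i)]

lemma det_fderiv_eq_zero_of_eventually_norm_apply_eq [Finite ι]
    [∀ i, FiniteDimensional ℝ (E i)] {i : ι} [Nontrivial (E i)]
    {w : (∀ i, E i) → ∀ i, E i} {x : ∀ i, E i} (hw : DifferentiableAt ℝ w x) {r : ℝ}
    (h : ∀ᶠ y in 𝓝 x, ‖w y i‖ = r) : (fderiv ℝ w x).det = 0 := by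
  have _ := Fintype.ofFinite ι
  by_contra hdet
  refine not_surjective_fderiv_of_eventually_norm_eq (differentiableAt_pi.1 hw i) h ?_
  rw [fderiv_apply hw]
  exact (surjective_eval i).comp (LinearMap.equivOfDetNeZero _ hdet).surjective

lemma det_fderiv_eq_neg_of_eventually_update_neg [Finite ι] [DecidableEq ι]
    [∀ i, FiniteDimensional ℝ (E i)] {i : ι} (hi : Odd (finrank ℝ (E i)))
    {w w' : (∀ i, E i) → ∀ i, E i} {x : ∀ i, E i}
    (hw : DifferentiableAt ℝ w x) (h : ∀ᶠ y in 𝓝 x, w' y = update (w y) i (-w y i)) :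
    (fderiv ℝ w' x).det = -(fderiv ℝ w x).det := by
  have _ := Fintype.ofFinite ι
  let T : ∀ j, E j →L[ℝ] E j := update (fun _ => .id ℝ _) i (-.id ℝ _)
  let A : (∀ j, E j) →L[ℝ] ∀ j, E j := .pi fun j => T j ∘L .proj j
  have det_A : A.det = -1 := by
    have det_T : (T i).det = -1 := by
      have : (T i : E i →ₗ[ℝ] E i) = (-1 : ℝ) • LinearMap.id := by ext; simp [T]
      rw [ContinuousLinearMap.det, this, LinearMap.det_smul, LinearMap.det_id, hi.neg_one_pow,
        mul_one]
    calc A.det = ∏ j, (T j).det := det_pi_comp_proj fun j => (T j : E j →ₗ[ℝ] E j)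
      _ = (T i).det := Fintype.prod_eq_single i fun j hj => by
        simp [T, hj, ContinuousLinearMap.det]
      _ = -1 := det_T
  have hA : w' =ᶠ[𝓝 x] A ∘ w := h.mono fun y hy => by
    ext j
    rcases eq_or_ne j i with rfl | hj <;> simp [A, T, *]
  rw [hA.fderiv_eq, (A.hasFDerivAt.comp x hw.hasFDerivAt).fderiv, ContinuousLinearMap.det,
    ContinuousLinearMap.toLinearMap_comp, LinearMap.det_comp]
  exact (congr_arg (· * _) det_A).trans (neg_one_mul _)

/-- The product of the closed shells `1 ≤ ‖x i‖ ≤ 2`, outside which `radialStep` has constant norm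
in some factor. -/
def shellProduct (E : ι → Type*) [∀ i, NormedAddCommGroup (E i)] : Set (∀ i, E i) :=
  Set.univ.pi fun _ => closedBall 0 2 \ ball 0 1

lemma isCompact_shellProduct [∀ i, FiniteDimensional ℝ (E i)] : IsCompact (shellProduct E) :=
  isCompact_univ_pi fun _ => (isCompact_closedBall 0 2).diff isOpen_ball

/-- The map applying `radialReflect` with the field `Y` in the factors indexed by `S` and
`radialStep` in the others. -/
noncomputable def piRadialReflect [DecidableEq ι] (Y : (∀ i, E i) → ∀ i, E i) (S : Finset ι)
    (x : ∀ i, E i) : ∀ i, E i :=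
  fun i => radialReflect (x i) (if i ∈ S then Y x i else 0)

variable [DecidableEq ι] {Y : (∀ i, E i) → ∀ i, E i}

lemma norm_piRadialReflect_apply (S : Finset ι) (x : ∀ i, E i) (i : ι) :
    ‖piRadialReflect Y S x i‖ = ‖radialStep (x i)‖ :=
  norm_radialReflect _ _

lemma hasCompactSupport_piRadialReflect_sub (hc : HasCompactSupport Y) (S T : Finset ι) :
    HasCompactSupport (piRadialReflect Y S - piRadialReflect Y T) := by
  refine hc.mono' fun x hx => subset_closure fun hYx => hx ?_
  ext i
  simp [piRadialReflect, hYx]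

lemma det_fderiv_piRadialReflect_eq_zero [Finite ι] [∀ i, FiniteDimensional ℝ (E i)]
    [∀ i, Nontrivial (E i)] {S : Finset ι}
    (hw : Differentiable ℝ (piRadialReflect Y S)) {x : ∀ i, E i} (hx : x ∉ shellProduct E) :
    (fderiv ℝ (piRadialReflect Y S) x).det = 0 := by
  have _ := Fintype.ofFinite ι
  obtain ⟨i, hi⟩ : ∃ i, ‖x i‖ < 1 ∨ 2 < ‖x i‖ := by
    simpa [shellProduct, or_comm, Classical.not_imp, not_le, imp_iff_not_or] using hx
  have hnorm : ContinuousAt (fun y : ∀ i, E i => ‖y i‖) x :=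
    (continuous_apply i).norm.continuousAt
  rcases hi with hi | hi
  · refine det_fderiv_eq_zero_of_eventually_norm_apply_eq (i := i) (r := 0) (hw x) ?_
    filter_upwards [hnorm.eventually_lt_const hi] with y hy
    rw [norm_piRadialReflect_apply, radialStep_of_norm_le hy.le, norm_zero]
  · refine det_fderiv_eq_zero_of_eventually_norm_apply_eq (i := i) (r := 1) (hw x) ?_
    filter_upwards [hnorm.eventually_const_lt hi] with y hy
    rw [norm_piRadialReflect_apply, norm_radialStep_of_le_norm hy.le]

lemma hasCompactSupport_det_fderiv_piRadialReflect [Finite ι]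
    [∀ i, FiniteDimensional ℝ (E i)] [∀ i, Nontrivial (E i)] {S : Finset ι}
    (hw : Differentiable ℝ (piRadialReflect Y S)) :
    HasCompactSupport fun x => (fderiv ℝ (piRadialReflect Y S) x).det :=
  .intro isCompact_shellProduct fun _ hx => det_fderiv_piRadialReflect_eq_zero hw hx

variable [Fintype ι]

lemma contDiff_piRadialReflect (hY : ContDiff ℝ 1 Y) (h : ∀ x i, inner ℝ (x i) (Y x i) = 0)
    (S : Finset ι) : ContDiff ℝ 1 (piRadialReflect Y S) := by
  refine contDiff_pi.2 fun i => contDiff_radialReflect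
    (contDiff_pi.1 contDiff_id i) ?_ fun x => ?_
  all_goals split_ifs
  · exact contDiff_pi.1 hY i
  · exact contDiff_const
  · exact h x i
  · exact inner_zero_right _

lemma continuous_det_fderiv_piRadialReflect (hY : ContDiff ℝ 1 Y)
    (h : ∀ x i, inner ℝ (x i) (Y x i) = 0) (S : Finset ι) :
    Continuous fun x => (fderiv ℝ (piRadialReflect Y S) x).det :=
  ContinuousLinearMap.continuous_det.comp
    ((contDiff_piRadialReflect hY h S).continuous_fderiv one_ne_zero)

variable [∀ i, FiniteDimensional ℝ (E i)]

lemma det_fderiv_piRadialReflect_symmDiff (hY : ContDiff ℝ 1 Y)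
    (h : ∀ x i, inner ℝ (x i) (Y x i) = 0) {i : ι} (hi : Odd (finrank ℝ (E i)))
    {x : ∀ i, E i} (hx : 1 < ‖Y x i‖) (S : Finset ι) :
    (fderiv ℝ (piRadialReflect Y (symmDiff S {i})) x).det
      = -(fderiv ℝ (piRadialReflect Y S) x).det := by
  refine det_fderiv_eq_neg_of_eventually_update_neg hi
    ((contDiff_piRadialReflect hY h S).differentiable one_ne_zero x) ?_
  have hnorm : ContinuousAt (fun y => ‖Y y i‖) x :=
    ((continuous_apply i).comp hY.continuous).norm.continuousAt
  filter_upwards [hnorm.eventually_const_lt hx] with y hy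
  ext j
  rcases eq_or_ne j i with rfl | hj
  · by_cases hjS : j ∈ S <;>
      simp [piRadialReflect, Finset.mem_symmDiff, hjS, radialReflect_zero_right,
        radialReflect_of_one_le_norm (h y j) hy.le]
  · simp [piRadialReflect, Finset.mem_symmDiff, hj]

lemma sum_det_fderiv_piRadialReflect_eq_zero (hE : ∀ i, Odd (finrank ℝ (E i)))
    (hY : ContDiff ℝ 1 Y) (h : ∀ x i, inner ℝ (x i) (Y x i) = 0)
    {x : ∀ i, E i} (hx : x ∈ shellProduct E → ∃ i, 1 < ‖Y x i‖) :
    ∑ S, (fderiv ℝ (piRadialReflect Y S) x).det = 0 := by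
  have _ (i) : Nontrivial (E i) := finrank_pos_iff.1 (hE i).pos
  by_cases hxK : x ∈ shellProduct E
  · obtain ⟨i, hi⟩ := hx hxK
    have hneg := det_fderiv_piRadialReflect_symmDiff hY h (hE i) hi
    refine Finset.sum_involution (fun S _ => symmDiff S {i}) (fun S _ => ?_) (fun S _ _ hS => ?_)
      (fun _ _ => Finset.mem_univ _) fun S _ => symmDiff_symmDiff_cancel_right _ _
    · rw [hneg, add_neg_cancel]
    · simp at hS
  · exact Finset.sum_eq_zero fun S _ => det_fderiv_piRadialReflect_eq_zero
      ((contDiff_piRadialReflect hY h S).differentiable one_ne_zero) hxK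

lemma det_fderiv_piRadialReflect_empty (x : ∀ i, E i) :
    (fderiv ℝ (piRadialReflect Y ∅) x).det = ∏ i, (fderiv ℝ radialStep (x i)).det := by
  have hstep (i) : DifferentiableAt ℝ radialStep (x i) :=
    contDiff_radialStep.differentiable one_ne_zero _
  have hpi : HasFDerivAt (piRadialReflect Y ∅)
      (.pi fun i => fderiv ℝ radialStep (x i) ∘L .proj i) x := hasFDerivAt_pi.2 fun i => by
    simpa [piRadialReflect, radialReflect_zero_right, comp_def] using
      (hstep i).hasFDerivAt.comp x (ContinuousLinearMap.proj (R := ℝ) i).hasFDerivAt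
  rw [hpi.fderiv]
  exact det_pi_comp_proj fun i => (fderiv ℝ radialStep (x i) : E i →ₗ[ℝ] E i)

lemma integral_det_fderiv_piRadialReflect_empty_pos [∀ i, Nontrivial (E i)]
    [MeasurableSpace (∀ i, E i)] [BorelSpace (∀ i, E i)] (μ : Measure (∀ i, E i))
    [μ.IsAddHaarMeasure] (hY : ContDiff ℝ 1 Y) (h : ∀ x i, inner ℝ (x i) (Y x i) = 0) :
    0 < ∫ x, (fderiv ℝ (piRadialReflect Y ∅) x).det ∂μ := by
  choose x₀ hx₀ using fun i => exists_det_fderiv_radialStep_pos (E := E i)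
  refine (continuous_det_fderiv_piRadialReflect hY h
    ∅).integral_pos_of_hasCompactSupport_nonneg_nonzero (x := x₀)
    (hasCompactSupport_det_fderiv_piRadialReflect
      ((contDiff_piRadialReflect hY h ∅).differentiable one_ne_zero)) (fun x => ?_) ?_
  · exact (Finset.prod_nonneg fun i _ => det_fderiv_radialStep_nonneg (x i)).trans_eq
      (det_fderiv_piRadialReflect_empty x).symm
  · rw [det_fderiv_piRadialReflect_empty]
    exact (Finset.prod_pos fun i _ => hx₀ i).ne'

lemma integrable_det_fderiv_piRadialReflect [∀ i, Nontrivial (E i)]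
    [MeasurableSpace (∀ i, E i)] [BorelSpace (∀ i, E i)] (μ : Measure (∀ i, E i))
    [IsFiniteMeasureOnCompacts μ] (hY : ContDiff ℝ 1 Y)
    (h : ∀ x i, inner ℝ (x i) (Y x i) = 0) (S : Finset ι) :
    Integrable (fun x => (fderiv ℝ (piRadialReflect Y S) x).det) μ :=
  (continuous_det_fderiv_piRadialReflect hY h S).integrable_of_hasCompactSupport
    (hasCompactSupport_det_fderiv_piRadialReflect
      ((contDiff_piRadialReflect hY h S).differentiable one_ne_zero))

lemma integral_det_fderiv_piRadialReflect_eq [Nonempty ι] [∀ i, Nontrivial (E i)]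
    [MeasurableSpace (∀ i, E i)] [BorelSpace (∀ i, E i)] (μ : Measure (∀ i, E i))
    [μ.IsAddHaarMeasure] (hY : ContDiff ℝ 1 Y) (hc : HasCompactSupport Y)
    (h : ∀ x i, inner ℝ (x i) (Y x i) = 0) (S : Finset ι) :
    ∫ x, (fderiv ℝ (piRadialReflect Y S) x).det ∂μ
      = ∫ x, (fderiv ℝ (piRadialReflect Y ∅) x).det ∂μ := by
  have hw (T) := contDiff_piRadialReflect hY h T
  have _ := Pi.nontrivial_at (f := E) (Classical.arbitrary ι)
  rw [← sub_eq_zero, ← integral_sub (integrable_det_fderiv_piRadialReflect μ hY h S)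
    (integrable_det_fderiv_piRadialReflect μ hY h ∅)]
  exact integral_det_fderiv_sub_eq_zero μ (hw S) (hw ∅)
    (hasCompactSupport_piRadialReflect_sub hc _ _)

end PiRadialReflect

section HairyBall

open MeasureTheory Set

variable {ι : Type*} [Fintype ι] {E : ι → Type*} [∀ i, NormedAddCommGroup (E i)]
  [∀ i, InnerProductSpace ℝ (E i)] [∀ i, FiniteDimensional ℝ (E i)]

lemma exists_forall_norm_apply_le_one {Y : (∀ i, E i) → ∀ i, E i}
    (hE : ∀ i, Odd (finrank ℝ (E i))) (hY : ContDiff ℝ 1 Y) (hc : HasCompactSupport Y)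
    (h : ∀ x i, inner ℝ (x i) (Y x i) = 0) : ∃ x ∈ shellProduct E, ∀ i, ‖Y x i‖ ≤ 1 := by
  classical
  rcases isEmpty_or_nonempty ι
  · exact ⟨isEmptyElim, fun i => isEmptyElim i, isEmptyElim⟩
  by_contra! hlarge
  have _ (i) : Nontrivial (E i) := finrank_pos_iff.1 (hE i).pos
  let _ : MeasurableSpace (∀ i, E i) := borel _
  have _ : BorelSpace (∀ i, E i) := ⟨rfl⟩
  let μ : Measure (∀ i, E i) := Measure.addHaar
  have hint (S) : Integrable (fun x => (fderiv ℝ (piRadialReflect Y S) x).det) μ :=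
    integrable_det_fderiv_piRadialReflect μ hY h S
  have hsum : ∑ S, ∫ x, (fderiv ℝ (piRadialReflect Y S) x).det ∂μ = 0 := by
    rw [← integral_finsetSum _ fun S _ => hint S]
    simp_rw [sum_det_fderiv_piRadialReflect_eq_zero hE hY h (hlarge _), integral_zero]
  refine hsum.not_gt (Finset.sum_pos (fun S _ => ?_) Finset.univ_nonempty)
  rw [integral_det_fderiv_piRadialReflect_eq μ hY hc h S]
  exact integral_det_fderiv_piRadialReflect_empty_pos μ hY h

lemma exists_contDiff_eq_one_tsupport_subset {V : Type*} [NormedAddCommGroup V] [NormedSpace ℝ V]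
    [FiniteDimensional ℝ V] {K U : Set V} (hK : IsCompact K) (hU : IsOpen U) (hKU : K ⊆ U) :
    ∃ χ : V → ℝ, ContDiff ℝ 1 χ ∧ HasCompactSupport χ ∧ tsupport χ ⊆ U ∧ ∀ x ∈ K, χ x = 1 := by
  obtain ⟨L, hL, hKL, hLU⟩ := exists_compact_between hK hU hKU
  obtain ⟨χ, hχ, -, hsupp, hone⟩ := exists_contMDiff_support_eq_eq_one_iff (n := 1) 𝓘(ℝ, V)
    isOpen_interior hK.isClosed hKL
  have htsupp : tsupport χ ⊆ L := closure_minimal (hsupp ▸ interior_subset) hL.isClosed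
  exact ⟨χ, hχ.contDiff, hL.of_isClosed_subset isClosed_closure htsupp, htsupp.trans hLU,
    fun x hx => (hone x).1 hx⟩

theorem exists_eq_zero_of_inner_apply_eq_zero {V : (∀ i, E i) → ∀ i, E i}
    (hE : ∀ i, Odd (finrank ℝ (E i))) (hV : ∀ x, (∀ i, x i ≠ 0) → ContDiffAt ℝ 1 V x)
    (h : ∀ x, (∀ i, x i ≠ 0) → ∀ i, inner ℝ (x i) (V x i) = 0) :
    ∃ x, (∀ i, x i ≠ 0) ∧ V x = 0 := by
  by_contra! hne
  have hKU : shellProduct E ⊆ {x | ∀ i, x i ≠ 0} := fun x hx i hi => by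
    simpa [hi] using hx i trivial
  have hU : IsOpen {x : ∀ i, E i | ∀ i, x i ≠ 0} := by
    simpa [Set.pi] using isOpen_set_pi finite_univ
      fun i _ => isOpen_compl_singleton (x := (0 : E i))
  obtain ⟨χ, hχ, hχc, hχU, hχ1⟩ :=
    exists_contDiff_eq_one_tsupport_subset isCompact_shellProduct hU hKU
  obtain ⟨ε, hε, hεV⟩ := isCompact_shellProduct.exists_forall_le' (f := fun x => ‖V x‖)
    (fun x hx => (hV x (hKU hx)).continuousAt.norm.continuousWithinAt)
    fun x hx => norm_pos_iff.2 (hne x (hKU hx))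
  have htan (x i) : inner ℝ (x i) ((χ x • (2 / ε) • V x) i) = 0 := by
    by_cases hx : ∀ i, x i ≠ 0
    · simp [inner_smul_right, h x hx i]
    · simp [image_eq_zero_of_notMem_tsupport fun hxs => hx (hχU hxs)]
  obtain ⟨x, hxK, hx⟩ := exists_forall_norm_apply_le_one hE
    (contMDiff_of_tsupport fun x hx => (hχ.contDiffAt.smul
      ((hV x (hχU (tsupport_smul_subset_left _ _ hx))).const_smul _)).contMDiffAt).contDiff
    hχc.smul_right htan
  have hle : 2 / ε * ‖V x‖ ≤ 1 := by
    simpa [hχ1 x hxK, norm_smul, abs_of_pos hε] using (pi_norm_le_iff_of_nonneg zero_le_one).2 hx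
  have hge : 2 / ε * ε ≤ 2 / ε * ‖V x‖ := by gcongr; exact hεV x hxK
  rw [div_mul_cancel₀ _ hε.ne'] at hge
  linarith

end HairyBall

section PiManifold

variable {𝕜 : Type*} [NontriviallyNormedField 𝕜] {ι : Type*} [Fintype ι]
  {E : ι → Type*} [∀ i, NormedAddCommGroup (E i)] [∀ i, NormedSpace 𝕜 (E i)]
  {H : ι → Type*} [∀ i, TopologicalSpace (H i)] {I : ∀ i, ModelWithCorners 𝕜 (E i) (H i)}
  {M : ι → Type*} [∀ i, TopologicalSpace (M i)] [∀ i, ChartedSpace (H i) (M i)]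
  {E' : Type*} [NormedAddCommGroup E'] [NormedSpace 𝕜 E'] {H' : Type*} [TopologicalSpace H']
  {I' : ModelWithCorners 𝕜 E' H'} {N : Type*} [TopologicalSpace N] [ChartedSpace H' N]
  {n : WithTop ℕ∞}

lemma contMDiffAt_piModel_iff {f : N → ∀ i, M i} {x : N} :
    ContMDiffAt I' (ModelWithCorners.pi I) n f x
      ↔ ∀ i, ContMDiffAt I' (I i) n (fun y => f y i) x := by
  simp_rw [contMDiffAt_iff, forall_and, continuousAt_pi]
  exact and_congr_right' contDiffWithinAt_pi

lemma contMDiff_eval_piModel (i : ι) :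
    ContMDiff (ModelWithCorners.pi I) (I i) n (fun p : ∀ i, M i => p i) :=
  fun _ => contMDiffAt_piModel_iff.1 contMDiffAt_id i

end PiManifold

lemma exists_continuousLinearMap_inner_self_apply_eq_zero {F : Type*} [NormedAddCommGroup F]
    [InnerProductSpace ℝ F] [FiniteDimensional ℝ F] (hF : Even (finrank ℝ F)) :
    ∃ J : F →L[ℝ] F, (∀ v, inner ℝ v (J v) = 0) ∧ Injective J := by
  obtain ⟨r, hr⟩ := hF
  let W := EuclideanSpace ℂ (Fin r)
  let _ : InnerProductSpace ℝ W := InnerProductSpace.complexToReal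
  have hW : finrank ℝ W = finrank ℝ F := by
    rw [← finrank_mul_finrank ℝ ℂ W]
    simp [W, hr, two_mul]
  let e : W ≃ₗᵢ[ℝ] F := (stdOrthonormalBasis ℝ W).equiv (stdOrthonormalBasis ℝ F) (finCongr hW)
  let J : W ≃L[ℝ] W := ContinuousLinearEquiv.smulLeft (Units.mk0 Complex.I Complex.I_ne_zero)
  let JF : F ≃L[ℝ] F := e.symm.toContinuousLinearEquiv.trans J |>.trans e.toContinuousLinearEquiv
  refine ⟨JF, fun v => ?_, JF.injective⟩
  rw [← e.symm.inner_map_map]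
  simpa [JF, J] using real_inner_I_smul_self ℂ (e.symm v)

lemma fderiv_apply_eq_zero_of_eventually_eq {V W : Type*} [NormedAddCommGroup V] [NormedSpace ℝ V]
    [NormedAddCommGroup W] [NormedSpace ℝ W] {G : V → W} {x v : V} (hG : DifferentiableAt ℝ G x)
    (h : ∀ᶠ t : ℝ in nhds 0, G (x + t • v) = G x) : fderiv ℝ G x v = 0 := by
  rw [← hG.lineDeriv_eq_fderiv, lineDeriv, Filter.EventuallyEq.deriv_eq h, deriv_const]

section PullbackField

variable {ι : Type*} [Fintype ι] {E : ι → Type*} [∀ i, NormedAddCommGroup (E i)]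
  [∀ i, InnerProductSpace ℝ (E i)] [∀ i, FiniteDimensional ℝ (E i)]

lemma inner_sum_apply_smul_stdOrthonormalBasis {V : Type*} [NormedAddCommGroup V]
    [InnerProductSpace ℝ V] [FiniteDimensional ℝ V] (φ : V →L[ℝ] ℝ) (z : V) :
    inner ℝ z (∑ k, φ (stdOrthonormalBasis ℝ V k) • stdOrthonormalBasis ℝ V k) = φ z := by
  conv_rhs => rw [← (stdOrthonormalBasis ℝ V).sum_repr' z]
  simp [inner_sum, inner_smul_right, real_inner_comm, mul_comm]

lemma exists_forall_inner_fderiv_eq_zero [DecidableEq ι] {F : Type*} [NormedAddCommGroup F]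
    [InnerProductSpace ℝ F] {G u : (∀ i, E i) → F} (hE : ∀ i, Odd (finrank ℝ (E i)))
    (hG : ∀ x, (∀ i, x i ≠ 0) → ContDiffAt ℝ 2 G x)
    (hu : ∀ x, (∀ i, x i ≠ 0) → ContDiffAt ℝ 1 u x)
    (hrad : ∀ x, (∀ i, x i ≠ 0) → ∀ i, fderiv ℝ G x (Pi.single i (x i)) = 0) :
    ∃ x, (∀ i, x i ≠ 0) ∧ ∀ v, inner ℝ (u x) (fderiv ℝ G x v) = 0 := by
  let φ (x : ∀ i, E i) (i) : E i →L[ℝ] ℝ := innerSL ℝ (u x) ∘L fderiv ℝ G x ∘L .single ℝ E i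
  let V (x : ∀ i, E i) (i : ι) : E i :=
    ∑ k, φ x i (stdOrthonormalBasis ℝ _ k) • stdOrthonormalBasis ℝ _ k
  have hV (x i z) : inner ℝ z (V x i) = φ x i z :=
    inner_sum_apply_smul_stdOrthonormalBasis _ z
  have hVdiff (x) (hx : ∀ i, x i ≠ 0) : ContDiffAt ℝ 1 V x := by
    refine contDiffAt_pi.2 fun i => ContDiffAt.sum fun k _ => ContDiffAt.smul ?_ contDiffAt_const
    exact (hu x hx).inner ℝ (((hG x hx).fderiv_right le_rfl).clm_apply contDiffAt_const)
  obtain ⟨x, hx, hVx⟩ := exists_eq_zero_of_inner_apply_eq_zero hE hVdiff fun x hx i => by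
    simp [hV, φ, hrad x hx i]
  refine ⟨x, hx, fun v => ?_⟩
  calc inner ℝ (u x) (fderiv ℝ G x v) = ∑ i, φ x i (v i) := by
        rw [← LinearMap.sum_single_apply E v]
        simp [φ, inner_sum]
    _ = 0 := Finset.sum_eq_zero fun i _ => by simp [← hV, hVx]

end PullbackField

section SphereProj

variable {E : Type*} [NormedAddCommGroup E] [NormedSpace ℝ E] [Nontrivial E]

open Classical in
/-- The radial projection onto the unit sphere, with an arbitrary value at the origin. -/
noncomputable def sphereProj (x : E) : sphere (0 : E) 1 :=
  if hx : x = 0 then Classical.choice (NormedSpace.sphere_nonempty.2 zero_le_one).to_subtype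
  else ⟨‖x‖⁻¹ • x, by simp [norm_smul, hx]⟩

lemma coe_sphereProj {x : E} (hx : x ≠ 0) : (sphereProj x : E) = ‖x‖⁻¹ • x := by
  simp [sphereProj, hx]

lemma sphereProj_smul {c : ℝ} (hc : 0 < c) (x : E) : sphereProj (c • x) = sphereProj x := by
  rcases eq_or_ne x 0 with rfl | hx
  · rw [smul_zero]
  · ext1
    rw [coe_sphereProj hx, coe_sphereProj (smul_ne_zero hc.ne' hx), norm_smul,
      Real.norm_of_nonneg hc.le, smul_smul]
    field_simp

lemma sphereProj_coe (p : sphere (0 : E) 1) : sphereProj (p : E) = p := by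
  ext1
  simp [coe_sphereProj (ne_zero_of_mem_unit_sphere p)]

lemma contMDiffAt_sphereProj {E : Type*} [NormedAddCommGroup E] [InnerProductSpace ℝ E]
    [Nontrivial E] {n : ℕ} [Fact (finrank ℝ E = n + 1)] {m : WithTop ℕ∞} {x : E}
    (hx : x ≠ 0) : ContMDiffAt 𝓘(ℝ, E) (𝓡 n) m sphereProj x := by
  let U : TopologicalSpace.Opens E := ⟨{0}ᶜ, isOpen_compl_singleton⟩
  have hU : ContMDiff 𝓘(ℝ, E) 𝓘(ℝ, E) m fun y : U => (sphereProj (y : E) : E) := fun y => by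
    have hy : ContDiffAt ℝ m (fun y : E => ‖y‖⁻¹ • y) y :=
      ((contDiffAt_norm ℝ y.2).inv (norm_ne_zero_iff.2 y.2)).smul contDiffAt_id
    refine (hy.contMDiffAt.comp y contMDiff_subtype_val.contMDiffAt).congr_of_eventuallyEq
      (.of_forall fun z => coe_sphereProj z.2)
  exact (contMDiffAt_subtype_iff (x := ⟨x, hx⟩)).1
    (hU.codRestrict_sphere fun y => (sphereProj _).2).contMDiffAt

end SphereProj

section SphereLift

variable {ι : Type*} {E : ι → Type*} [∀ i, NormedAddCommGroup (E i)] [∀ i, NormedSpace ℝ (E i)]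
  [∀ i, Nontrivial (E i)] {F : Type*} [NormedAddCommGroup F]

/-- The product of the radial projections onto the unit spheres. -/
noncomputable def piSphereProj (x : ∀ i, E i) (i : ι) : sphere (0 : E i) 1 := sphereProj (x i)

/-- The extension of `f` by homogeneity of degree zero in each variable, with values in the ambient
space of the target sphere. -/
noncomputable def sphereLift (f : (∀ i, sphere (0 : E i) 1) → sphere (0 : F) 1)
    (x : ∀ i, E i) : F :=
  f (piSphereProj x)

lemma fderiv_sphereLift_single_self [Finite ι] [DecidableEq ι] [NormedSpace ℝ F]
    {f : (∀ i, sphere (0 : E i) 1) → sphere (0 : F) 1} {x : ∀ i, E i}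
    (hG : DifferentiableAt ℝ (sphereLift f) x) (i : ι) :
    fderiv ℝ (sphereLift f) x (Pi.single i (x i)) = 0 := by
  have _ := Fintype.ofFinite ι
  refine fderiv_apply_eq_zero_of_eventually_eq hG ?_
  filter_upwards [lt_mem_nhds (neg_one_lt_zero : (-1 : ℝ) < 0)] with t ht
  have hproj : piSphereProj (x + t • Pi.single i (x i)) = piSphereProj x := by
    funext j
    rcases eq_or_ne j i with rfl | hj
    · have hscale : x j + t • x j = (1 + t) • x j := by rw [add_smul, one_smul]
      simp [piSphereProj, hscale, sphereProj_smul (neg_lt_iff_pos_add'.1 ht)]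
    · simp [piSphereProj, hj]
  rw [sphereLift, hproj, sphereLift]

end SphereLift

section SphereLiftManifold

variable {ι : Type*} [Fintype ι] {E : ι → Type*} [∀ i, NormedAddCommGroup (E i)]
  [∀ i, InnerProductSpace ℝ (E i)] [∀ i, Nontrivial (E i)] {n : ι → ℕ}
  [∀ i, Fact (finrank ℝ (E i) = n i + 1)] {x : ∀ i, E i}

lemma contMDiffAt_piSphereProj {m : WithTop ℕ∞} (hx : ∀ i, x i ≠ 0) :
    ContMDiffAt 𝓘(ℝ, ∀ i, E i) (ModelWithCorners.pi fun i => 𝓡 (n i)) m piSphereProj x :=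
  contMDiffAt_piModel_iff.2 fun i => (contMDiffAt_sphereProj (hx i)).comp x
    (contDiff_pi.1 contDiff_id i).contMDiff.contMDiffAt

lemma surjective_mfderiv_piSphereProj (hx : ∀ i, x i ≠ 0) :
    Surjective (mfderiv 𝓘(ℝ, ∀ i, E i) (ModelWithCorners.pi fun i => 𝓡 (n i)) piSphereProj x) := by
  let s (p : ∀ i, sphere (0 : E i) 1) (i) : E i := ‖x i‖ • (p i : E i)
  have hsx : s (piSphereProj x) = x := by
    ext i
    simp [s, piSphereProj, coe_sphereProj (hx i), smul_smul, hx i]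
  have hs : MDifferentiableAt (ModelWithCorners.pi fun i => 𝓡 (n i)) 𝓘(ℝ, ∀ i, E i) s
      (piSphereProj x) := by
    refine (contMDiffAt_pi_space.2 fun i => ?_).mdifferentiableAt one_ne_zero
    exact ((contDiff_const_smul ‖x i‖).contMDiff.comp
      (contMDiff_coe_sphere.comp (contMDiff_eval_piModel i))).contMDiffAt
  have hid : piSphereProj ∘ s = id := by
    ext p i
    simp [s, piSphereProj, sphereProj_smul (norm_pos_iff.2 (hx i)), sphereProj_coe]
  have hq : MDifferentiableAt 𝓘(ℝ, ∀ i, E i) (ModelWithCorners.pi fun i => 𝓡 (n i)) piSphereProj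
      (s (piSphereProj x)) := by
    rw [hsx]
    exact (contMDiffAt_piSphereProj hx).mdifferentiableAt one_ne_zero
  have hcomp := mfderiv_comp (piSphereProj x) hq hs
  rw [hid, mfderiv_id, hsx] at hcomp
  exact fun v => ⟨_, (DFunLike.congr_fun hcomp v).symm⟩

variable {F : Type*} [NormedAddCommGroup F] [InnerProductSpace ℝ F] {k : ℕ}
  [Fact (finrank ℝ F = k + 1)] {f : (∀ i, sphere (0 : E i) 1) → sphere (0 : F) 1}

lemma contDiffAt_sphereLift {m : WithTop ℕ∞}
    (hf : ContMDiff (ModelWithCorners.pi fun i => 𝓡 (n i)) (𝓡 k) m f) (hx : ∀ i, x i ≠ 0) :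
    ContDiffAt ℝ m (sphereLift f) x :=
  ((contMDiff_coe_sphere.comp hf).contMDiffAt.comp x (contMDiffAt_piSphereProj hx)).contDiffAt

lemma orthogonal_le_range_fderiv_sphereLift
    (hf : MDifferentiableAt (ModelWithCorners.pi fun i => 𝓡 (n i)) (𝓡 k) f (piSphereProj x))
    (hx : ∀ i, x i ≠ 0)
    (hs : Surjective (mfderiv (ModelWithCorners.pi fun i => 𝓡 (n i)) (𝓡 k) f (piSphereProj x))) :
    (ℝ ∙ sphereLift f x)ᗮ ≤ (fderiv ℝ (sphereLift f) x).range := by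
  have hq : MDifferentiableAt 𝓘(ℝ, ∀ i, E i) (ModelWithCorners.pi fun i => 𝓡 (n i))
      piSphereProj x :=
    (contMDiffAt_piSphereProj hx).mdifferentiableAt one_ne_zero
  have hcoe : MDifferentiableAt (𝓡 k) 𝓘(ℝ, F) ((↑) : sphere (0 : F) 1 → F) (f (piSphereProj x)) :=
    contMDiff_coe_sphere.contMDiffAt.mdifferentiableAt one_ne_zero
  have hcomp := mfderiv_comp x hcoe (hf.comp x hq)
  rw [mfderiv_comp x hf hq] at hcomp
  have hr := range_mvfderiv_subtypeVal (n := k) (f (piSphereProj x))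
  intro w hw
  obtain ⟨a, rfl⟩ := hr.ge hw
  obtain ⟨v, rfl⟩ := (hs.comp (surjective_mfderiv_piSphereProj hx)) a
  refine ⟨v, ?_⟩
  rw [← mfderiv_eq_fderiv]
  exact DFunLike.congr_fun hcomp v

end SphereLiftManifold

theorem exists_critical_point_of_smooth_map_products_of_spheres_to_sphere_general
    {ι : Type*} [Fintype ι] {E : ι → Type*} [∀ i, NormedAddCommGroup (E i)]
    [∀ i, InnerProductSpace ℝ (E i)] {n : ι → ℕ} [∀ i, Fact (finrank ℝ (E i) = n i + 1)]
    (hn : ∀ i, Even (n i)) {F : Type*} [NormedAddCommGroup F] [InnerProductSpace ℝ F] {k : ℕ}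
    [hF : Fact (finrank ℝ F = k + 1)] (hk : Odd k)
    {f : (∀ i, sphere (0 : E i) 1) → sphere (0 : F) 1}
    (hf : ContMDiff (ModelWithCorners.pi fun i => 𝓡 (n i)) (𝓡 k) 2 f) :
    ∃ x, ¬ Surjective (mfderiv (ModelWithCorners.pi fun i => 𝓡 (n i)) (𝓡 k) f x) := by
  classical
  have hE (i) : finrank ℝ (E i) = n i + 1 := Fact.out
  have _ (i) : FiniteDimensional ℝ (E i) := .of_fact_finrank_eq_succ (n i)
  have _ (i) : Nontrivial (E i) := nontrivial_of_finrank_eq_succ (hE i)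
  have _ : FiniteDimensional ℝ F := .of_fact_finrank_eq_succ k
  obtain ⟨J, hJ, hJinj⟩ := exists_continuousLinearMap_inner_self_apply_eq_zero
    (F := F) (hF.out ▸ hk.add_one)
  have hG (x : ∀ i, E i) (hx : ∀ i, x i ≠ 0) : ContDiffAt ℝ 2 (sphereLift f) x :=
    contDiffAt_sphereLift hf hx
  obtain ⟨x, hx, hcrit⟩ := exists_forall_inner_fderiv_eq_zero (fun i => hE i ▸ (hn i).add_one) hG
    (fun x hx => J.contDiff.contDiffAt.comp x ((hG x hx).of_le one_le_two))
    fun x hx => fderiv_sphereLift_single_self ((hG x hx).differentiableAt two_ne_zero)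
  refine ⟨piSphereProj x, fun hs => ?_⟩
  obtain ⟨v, hv⟩ := orthogonal_le_range_fderiv_sphereLift
    (hf.mdifferentiable two_ne_zero _) hx hs
    (Submodule.mem_orthogonal_singleton_iff_inner_right.2 (hJ (sphereLift f x)))
  have hJ0 : J (sphereLift f x) = 0 := inner_self_eq_zero.1 (hv ▸ hcrit v)
  exact ne_zero_of_mem_unit_sphere (f (piSphereProj x)) (hJinj (hJ0.trans (map_zero J).symm))

/-- **Lower bound `1 ≤ φ(S⁴ × ⋯ × S⁴, S³)`.**
For every `m ≥ 1`, every `C^∞` map from the `m`-fold product of `4`-spheres to the `3`-sphere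
has at least one critical point, i.e. a point where its differential is not surjective.
In particular `S⁴ × ⋯ × S⁴` does not fiber smoothly over `S³`. -/
theorem exists_critical_point_of_smooth_map_products_of_spheres_to_sphere
    (m : ℕ) (hm : 1 ≤ m)
    (f : (∀ _ : Fin m, sphere (0 : EuclideanSpace ℝ (Fin 5)) 1) →
      sphere (0 : EuclideanSpace ℝ (Fin 4)) 1)
    (hf : ContMDiff (ModelWithCorners.pi fun _ : Fin m => 𝓡 4) (𝓡 3) (⊤ : ℕ∞) f) :
    ∃ x : ∀ _ : Fin m, sphere (0 : EuclideanSpace ℝ (Fin 5)) 1,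
      ¬ Function.Surjective
        (mfderiv (ModelWithCorners.pi fun _ : Fin m => 𝓡 4) (𝓡 3) f x) :=
  exists_critical_point_of_smooth_map_products_of_spheres_to_sphere_general
    (fun _ => by decide) (by decide) (hf.of_le (by norm_cast))
end
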